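/- arXiv:1903.11497 — 2 statements merged into one kernel-verified Lean document; each statement's English description precedes it below -/
import Mathlib

section
/- Let F be a finite field with q elements, ψ : F → ℂˣ a nontrivial additive character, and n > m ≥ 1. Let π be an irreducible cuspidal representation of GL_n(F) and τ an irreducible generic representation of GL_m(F). Define S = |U_m(F)|^{-1} Σ_{g ∈ GL_m(F)} J_{π,ψ_n}(C(g)) J_{τ,ψ_m^{-1}}(g), where C(g) is the n×n block matrix with I_{n−m} in the top-right block (rows 1,…,n−m, columns m+1,…,n), g in the bottom-left block (rows n−m+1,…,n, columns 1,…,m), and zeros elsewhere, and J_{τ,ψ_m^{-1}} is the normalized Bessel function of τ with respect to the character ψ_m^{-1} of U_m(F). Then S satisfies the Rankin–Selberg functional equation: for every integer 0 ≤ k ≤ n−m−1, every ψ_n-Whittaker functional λ on π, v ∈ V, every ψ_m^{-1}-Whittaker functional μ on τ, w ∈ W, setting W_π(g) = λ(π(g)v) and W_τ(h) = μ(τ(h)w), one has S · q^{km} · |U_m(F)|^{-1} Σ_{g ∈ GL_m(F)} Σ_{x ∈ M_{(n−m−1−k)×m}(F)} W_π(A(g,x)) W_τ(g) = |U_m(F)|^{-1}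 Σ_{g ∈ GL_m(F)} Σ_{y ∈ M_{m×k}(F)} W_π(B(g,y)) W_τ(g), with A(g,x) the n×n block matrix with diagonal blocks g, I_{n−m−1−k}, I_{k+1} and x in the block below g (all other off-diagonal blocks zero), and B(g,y) the n×n block matrix with block rows of heights (n−m−k, k, m) and block columns of widths (m, n−m−k, k) given by rows [0, I_{n−m−k}, 0], [0, 0, I_k], [g, 0, y]. -/
/-!
Statement 2: the Bessel-function expression
`S = |U_m|⁻¹ ∑_g J_{π,ψ_n}(C(g)) J_{τ,ψ_m⁻¹}(g)` satisfies the Rankin–Selberg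
functional equation (Roditty, Lemma 6.1.4).
-/

open Matrix BigOperators

namespace Stmt2

variable (F : Type*) [Field F] [Fintype F] [DecidableEq F]

noncomputable instance {n : ℕ} : Fintype (GL (Fin n) F) :=
  inferInstanceAs (Fintype (Matrix (Fin n) (Fin n) F)ˣ)

/-- A matrix is upper triangular unipotent. -/
def IsUnip {n : ℕ} (u : Matrix (Fin n) (Fin n) F) : Prop :=
  (∀ i, u i i = 1) ∧ ∀ i j : Fin n, (j : ℕ) < (i : ℕ) → u i j = 0

open scoped Classical in
/-- The subgroup `U_n(F)` of upper triangular unipotent matrices, as a finset of `GL n F`. -/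
noncomputable def UnipFinset (n : ℕ) : Finset (GL (Fin n) F) :=
  Finset.univ.filter fun u => IsUnip F (u : Matrix (Fin n) (Fin n) F)

/-- The sum of the superdiagonal entries of a matrix. -/
def superdiag {n : ℕ} (u : Matrix (Fin n) (Fin n) F) : F :=
  ∑ i : Fin n, ∑ j : Fin n, if (j : ℕ) = (i : ℕ) + 1 then u i j else 0

variable {F}

/-- The character `ψ_n` of `U_n(F)`: `ψ_n(u) = ψ(u_{1,2} + ⋯ + u_{n-1,n})`. -/
noncomputable def psiN (ψ : AddChar F ℂˣ) {n : ℕ} (u : GL (Fin n) F) : ℂ :=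
  (ψ (superdiag F (u : Matrix (Fin n) (Fin n) F)) : ℂˣ)

/-- Promote a matrix to an element of `GL n F` (junk value `1` if not invertible). -/
noncomputable def toGL {n : ℕ} (M : Matrix (Fin n) (Fin n) F) : GL (Fin n) F :=
  if h : M.det ≠ 0 then Matrix.GeneralLinearGroup.mkOfDetNeZero M h else 1

/-- `lam` is a `χ`-Whittaker functional for `π`. -/
def IsWhittaker {n : ℕ} {V : Type*} [AddCommGroup V] [Module ℂ V]
    (π : Representation ℂ (GL (Fin n) F) V) (χ : GL (Fin n) F → ℂ)
    (lam : V →ₗ[ℂ] ℂ) : Prop :=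
  ∀ u : GL (Fin n) F, IsUnip F (u : Matrix (Fin n) (Fin n) F) →
    ∀ v : V, lam (π u v) = χ u * lam v

/-- `π` is irreducible: the only invariant subspaces are `⊥` and `⊤`. -/
def IsIrreducible {n : ℕ} {V : Type*} [AddCommGroup V] [Module ℂ V]
    (π : Representation ℂ (GL (Fin n) F) V) : Prop :=
  ∀ W : Submodule ℂ V, (∀ g v, v ∈ W → π g v ∈ W) → W = ⊥ ∨ W = ⊤

/-- `π` is cuspidal. -/
def IsCuspidal {n : ℕ} {V : Type*} [AddCommGroup V] [Module ℂ V]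
    (π : Representation ℂ (GL (Fin n) F) V) : Prop :=
  ∀ n₁ n₂ : ℕ, 1 ≤ n₁ → 1 ≤ n₂ → ∀ h : n₁ + n₂ = n,
    ∑ x : Matrix (Fin n₁) (Fin n₂) F,
      π (toGL (Matrix.reindex (finSumFinEquiv.trans (finCongr h))
          (finSumFinEquiv.trans (finCongr h)) (Matrix.fromBlocks 1 x 0 1))) = 0

/-- The normalized Bessel function
`J_{π,θ}(g) = |U_n(F)|⁻¹ ∑_{u ∈ U_n(F)} χ_π(gu) θ(u)⁻¹`. -/
noncomputable def Bessel {n : ℕ} {V : Type*} [AddCommGroup V] [Module ℂ V]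
    (π : Representation ℂ (GL (Fin n) F) V) (θ : GL (Fin n) F → ℂ)
    (g : GL (Fin n) F) : ℂ :=
  ((UnipFinset F n).card : ℂ)⁻¹ *
    ∑ u ∈ UnipFinset F n, LinearMap.trace ℂ V (π (g * u)) * (θ u)⁻¹

/-- The block matrix `A(g,x)` as in the functional equation. -/
def Amat {n m k : ℕ} (hm : m < n) (hk : k ≤ n - m - 1)
    (g : Matrix (Fin m) (Fin m) F) (x : Matrix (Fin (n - m - 1 - k)) (Fin m) F) :
    Matrix (Fin n) (Fin n) F := fun i j =>
  if hi : (i : ℕ) < m then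
    if hj : (j : ℕ) < m then g ⟨i, hi⟩ ⟨j, hj⟩ else 0
  else
    if hj : (j : ℕ) < m then
      if hik : (i : ℕ) < n - k - 1 then
        x ⟨(i : ℕ) - m, by omega⟩ ⟨j, hj⟩
      else 0
    else if (i : ℕ) = (j : ℕ) then 1 else 0

/-- The block matrix `B(g,y)` as in the functional equation. -/
def Bmat {n m k : ℕ} (hm : m < n) (hk : k ≤ n - m - 1)
    (g : Matrix (Fin m) (Fin m) F) (y : Matrix (Fin m) (Fin k) F) :
    Matrix (Fin n) (Fin n) F := fun i j =>
  if hi : (i : ℕ) < n - m then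
    if (j : ℕ) = (i : ℕ) + m then 1 else 0
  else
    if hj : (j : ℕ) < m then g ⟨(i : ℕ) - (n - m), by omega⟩ ⟨j, hj⟩
    else if hj2 : n - k ≤ (j : ℕ) then
      y ⟨(i : ℕ) - (n - m), by omega⟩ ⟨(j : ℕ) - (n - k), by omega⟩
    else 0

/-- The block matrix `C(g)` with `I_{n-m}` in the top-right block and `g` in the
bottom-left block. -/
def Cmat {n m : ℕ} (hm : m < n) (g : Matrix (Fin m) (Fin m) F) :
    Matrix (Fin n) (Fin n) F := fun i j =>
  if hi : (i : ℕ) < n - m then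
    if (j : ℕ) = (i : ℕ) + m then 1 else 0
  else
    if hj : (j : ℕ) < m then g ⟨(i : ℕ) - (n - m), by omega⟩ ⟨j, hj⟩ else 0

/-! ### Basic facts on `toGL`, unipotent matrices and the character -/

lemma toGL_val {n : ℕ} {M : Matrix (Fin n) (Fin n) F} (h : M.det ≠ 0) :
    ((toGL M : GL (Fin n) F) : Matrix (Fin n) (Fin n) F) = M := by
  rw [toGL, dif_pos h]; rfl

lemma toGL_val' {n : ℕ} {M N : Matrix (Fin n) (Fin n) F} (h : M * N = 1) :
    ((toGL M : GL (Fin n) F) : Matrix (Fin n) (Fin n) F) = M := by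
  apply toGL_val
  intro h0
  have := congrArg Matrix.det h
  rw [Matrix.det_mul, h0] at this
  simp at this

lemma toGL_coe {n : ℕ} (g : GL (Fin n) F) : toGL (g : Matrix (Fin n) (Fin n) F) = g := by
  apply Units.ext
  apply toGL_val' (N := (g⁻¹ : GL (Fin n) F))
  simp

/-- The group element `1 + N`, for `N` with square zero. -/
noncomputable def nu {n : ℕ} (N : Matrix (Fin n) (Fin n) F) : GL (Fin n) F := toGL (1 + N)

lemma nu_val {n : ℕ} {N : Matrix (Fin n) (Fin n) F} (h : N * N = 0) :
    ((nu N : GL (Fin n) F) : Matrix (Fin n) (Fin n) F) = 1 + N := by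
  apply toGL_val' (N := 1 - N)
  rw [add_mul, mul_sub, mul_sub, h]
  simp

lemma nu_zero {n : ℕ} : (nu 0 : GL (Fin n) F) = 1 := by
  apply Units.ext
  rw [nu_val (by simp)]
  simp

lemma nu_add {n : ℕ} {N N' : Matrix (Fin n) (Fin n) F} (h : N * N = 0) (h' : N' * N' = 0)
    (h1 : N * N' = 0) (h2 : N' * N = 0) : nu (N + N') = nu N * nu N' := by
  apply Units.ext
  rw [Units.val_mul, nu_val h, nu_val h', nu_val]
  · rw [add_mul, mul_add, mul_add, h1]; simp [add_assoc, add_comm, add_left_comm]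
  · rw [add_mul, mul_add, mul_add, h, h', h1, h2]; simp

lemma IsUnip.mul {n : ℕ} {u v : Matrix (Fin n) (Fin n) F} (hu : IsUnip F u) (hv : IsUnip F v) :
    IsUnip F (u * v) := by
  constructor
  · intro i
    rw [Matrix.mul_apply, Finset.sum_eq_single i]
    · rw [hu.1, hv.1, one_mul]
    · intro k _ hk
      rcases lt_or_gt_of_ne hk with h | h
      · rw [hu.2 i k h, zero_mul]
      · rw [hv.2 k i h, mul_zero]
    · simp
  · intro i j hij
    rw [Matrix.mul_apply]
    apply Finset.sum_eq_zero
    intro k _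
    by_cases h : (k : ℕ) < i
    · rw [hu.2 i k h, zero_mul]
    · rw [hv.2 k j (by omega), mul_zero]

lemma IsUnip.one {n : ℕ} : IsUnip F (1 : Matrix (Fin n) (Fin n) F) := by
  constructor
  · intro i; simp
  · intro i j h
    rw [Matrix.one_apply_ne]
    intro h'; subst h'; omega

lemma IsUnip.pow {n : ℕ} {u : Matrix (Fin n) (Fin n) F} (hu : IsUnip F u) (k : ℕ) :
    IsUnip F (u ^ k) := by
  induction k with
  | zero => simpa using IsUnip.one
  | succ k ih => rw [pow_succ]; exact ih.mul hu

lemma IsUnip.inv {n : ℕ} {u : GL (Fin n) F} (hu : IsUnip F (u : Matrix (Fin n) (Fin n) F)) :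
    IsUnip F ((u⁻¹ : GL (Fin n) F) : Matrix (Fin n) (Fin n) F) := by
  have : u⁻¹ = u ^ (orderOf u - 1) := by
    rw [inv_eq_iff_mul_eq_one, ← pow_succ']
    have := orderOf_pos u
    rw [Nat.sub_add_cancel this, pow_orderOf_eq_one]
  rw [this, Units.val_pow_eq_pow_val]
  exact hu.pow _

lemma superdiag_mul {n : ℕ} {u v : Matrix (Fin n) (Fin n) F} (hu : IsUnip F u) (hv : IsUnip F v) :
    superdiag F (u * v) = superdiag F u + superdiag F v := by
  unfold superdiag
  rw [← Finset.sum_add_distrib]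
  refine Finset.sum_congr rfl fun i _ => ?_
  rw [← Finset.sum_add_distrib]
  refine Finset.sum_congr rfl fun j _ => ?_
  split_ifs with h
  · rw [Matrix.mul_apply, ← Finset.add_sum_erase _ _ (Finset.mem_univ i),
      ← Finset.add_sum_erase _ _ (Finset.mem_erase.2 ⟨?_, Finset.mem_univ j⟩),
      Finset.sum_eq_zero, hu.1, hv.1]
    · ring
    · intro k hk
      simp only [Finset.mem_erase, Finset.mem_univ, and_true] at hk
      by_cases h' : (k : ℕ) < i
      · rw [hu.2 i k h', zero_mul]
      · rw [hv.2 k j, mul_zero]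
        have h1 : (k : ℕ) ≠ i := fun h => hk.2 (Fin.ext h)
        have h2 : (k : ℕ) ≠ j := fun h => hk.1 (Fin.ext h)
        omega
    · intro h'; subst h'; omega
  · simp

/-- The additive character with complex values. -/
noncomputable def ps (ψ : AddChar F ℂˣ) : AddChar F ℂ := (Units.coeHom ℂ).compAddChar ψ

lemma ps_apply (ψ : AddChar F ℂˣ) (x : F) : ps ψ x = ((ψ x : ℂˣ) : ℂ) := rfl

lemma psiN_eq (ψ : AddChar F ℂˣ) {n : ℕ} (u : GL (Fin n) F) :
    psiN ψ u = ps ψ (superdiag F (u : Matrix (Fin n) (Fin n) F)) := rfl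

lemma ps_ne_zero (ψ : AddChar F ℂˣ) (x : F) : ps ψ x ≠ 0 := by
  rw [ps_apply]; exact Units.ne_zero _

lemma psiN_ne_zero (ψ : AddChar F ℂˣ) {n : ℕ} (u : GL (Fin n) F) : psiN ψ u ≠ 0 :=
  ps_ne_zero _ _

lemma psiN_inv_eq (ψ : AddChar F ℂˣ) {n : ℕ} (u : GL (Fin n) F) :
    (psiN ψ u)⁻¹ = psiN ψ⁻¹ u := by
  simp [psiN, AddChar.inv_apply, AddChar.map_neg_eq_inv]

lemma psiN_mul (ψ : AddChar F ℂˣ) {n : ℕ} {u v : GL (Fin n) F}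
    (hu : IsUnip F (u : Matrix (Fin n) (Fin n) F)) (hv : IsUnip F (v : Matrix (Fin n) (Fin n) F)) :
    psiN ψ (u * v) = psiN ψ u * psiN ψ v := by
  rw [psiN_eq, psiN_eq, psiN_eq, Units.val_mul, superdiag_mul hu hv, AddChar.map_add_eq_mul]

lemma ps_inj {ψ : AddChar F ℂˣ} (hψ : ∃ a : F, ψ a ≠ 1) {a b : F}
    (h : ∀ t : F, ps ψ (t * a) = ps ψ (t * b)) : a = b := by
  by_contra hab
  obtain ⟨x, hx⟩ := hψ
  apply hx
  have h0 : a - b ≠ 0 := sub_ne_zero.2 hab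
  have h1 := h (x / (a - b))
  have h2 : ps ψ x = 1 := by
    have : x = x / (a - b) * a + -(x / (a - b) * b) := by field_simp; ring
    rw [this, AddChar.map_add_eq_mul, h1, ← AddChar.map_add_eq_mul]
    simp
  rw [ps_apply] at h2
  exact Units.ext h2

lemma ps_sum {ψ : AddChar F ℂˣ} (hψ : ∃ a : F, ψ a ≠ 1) {j : ℕ} (y : Fin j → F) :
    ∑ a : Fin j → F, ps ψ (-(a ⬝ᵥ y)) = if y = 0 then ((Fintype.card F : ℂ)) ^ j else 0 := by
  split_ifs with h
  · subst h; simp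
  · let χ : AddChar (Fin j → F) ℂ :=
      { toFun := fun a => ps ψ (-(a ⬝ᵥ y))
        map_zero_eq_one' := by simp
        map_add_eq_mul' := fun a b => by
          rw [← AddChar.map_add_eq_mul, add_dotProduct, neg_add] }
    have hχ : χ ≠ 1 := by
      intro h1
      apply h
      funext i
      apply ps_inj hψ
      intro t
      have := DFunLike.congr_fun h1 (Pi.single i (-t))
      simpa [χ] using this
    exact AddChar.sum_eq_zero_of_ne_one hχ

lemma IsWhittaker.zero' {n : ℕ} {V : Type*} [AddCommGroup V] [Module ℂ V]
    {π : Representation ℂ (GL (Fin n) F) V} {χ : GL (Fin n) F → ℂ} {lam : V →ₗ[ℂ] ℂ}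
    (h : IsWhittaker π χ lam) {u : GL (Fin n) F} (hu : IsUnip F (u : Matrix (Fin n) (Fin n) F))
    (h1 : χ u = 1) (v : V) : lam (π u v) = lam v := by
  rw [h u hu, h1, one_mul]

/-- The unipotent averaging operator. -/
noncomputable def eOp {n : ℕ} {V : Type*} [AddCommGroup V] [Module ℂ V]
    (π : Representation ℂ (GL (Fin n) F) V) (θ : GL (Fin n) F → ℂ) : V →ₗ[ℂ] V :=
  ((UnipFinset F n).card : ℂ)⁻¹ • ∑ u ∈ UnipFinset F n, (θ u)⁻¹ • π u

lemma mem_UnipFinset {n : ℕ} {u : GL (Fin n) F} :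
    u ∈ UnipFinset F n ↔ IsUnip F (u : Matrix (Fin n) (Fin n) F) := by
  simp [UnipFinset]

lemma card_Unip_ne_zero (n : ℕ) : ((UnipFinset F n).card : ℂ) ≠ 0 := by
  have : (1 : GL (Fin n) F) ∈ UnipFinset F n := mem_UnipFinset.2 (by simpa using IsUnip.one)
  exact_mod_cast (Finset.card_pos.2 ⟨_, this⟩).ne'

section eOp
variable {n : ℕ} {V : Type*} [AddCommGroup V] [Module ℂ V]
    (π : Representation ℂ (GL (Fin n) F) V) (ψ : AddChar F ℂˣ)

lemma mul_eOp {u : GL (Fin n) F} (hu : IsUnip F (u : Matrix (Fin n) (Fin n) F)) :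
    π u * eOp π (psiN ψ) = psiN ψ u • eOp π (psiN ψ) := by
  unfold eOp
  rw [mul_smul_comm, smul_comm]
  congr 1
  rw [Finset.mul_sum, Finset.smul_sum]
  refine Finset.sum_nbij' (fun x => u * x) (fun x => u⁻¹ * x) ?_ ?_ ?_ ?_ ?_
  · intro x hx
    rw [mem_UnipFinset] at *
    rw [Units.val_mul]; exact hu.mul hx
  · intro x hx
    rw [mem_UnipFinset] at *
    rw [Units.val_mul]; exact hu.inv.mul hx
  · intro x _; simp
  · intro x _; simp
  · intro x hx
    rw [mem_UnipFinset] at hx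
    rw [psiN_mul ψ hu hx, map_mul, mul_smul_comm, smul_smul]
    congr 1
    field_simp [psiN_ne_zero ψ u, psiN_ne_zero ψ x]

lemma eOp_mul {u : GL (Fin n) F} (hu : IsUnip F (u : Matrix (Fin n) (Fin n) F)) :
    eOp π (psiN ψ) * π u = psiN ψ u • eOp π (psiN ψ) := by
  unfold eOp
  rw [smul_mul_assoc, smul_comm]
  congr 1
  rw [Finset.sum_mul, Finset.smul_sum]
  refine Finset.sum_nbij' (fun x => x * u) (fun x => x * u⁻¹) ?_ ?_ ?_ ?_ ?_
  · intro x hx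
    rw [mem_UnipFinset] at *
    rw [Units.val_mul]; exact hx.mul hu
  · intro x hx
    rw [mem_UnipFinset] at *
    rw [Units.val_mul]; exact hx.mul hu.inv
  · intro x _; simp
  · intro x _; simp
  · intro x hx
    rw [mem_UnipFinset] at hx
    rw [psiN_mul ψ hx hu, map_mul, smul_mul_assoc, smul_smul]
    congr 1
    field_simp [psiN_ne_zero ψ u, psiN_ne_zero ψ x]

lemma whittaker_eOp {lam : V →ₗ[ℂ] ℂ} (h : IsWhittaker π (psiN ψ) lam) (v : V) :
    lam (eOp π (psiN ψ) v) = lam v := by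
  unfold eOp
  simp only [LinearMap.smul_apply, LinearMap.sum_apply, map_smul, map_sum, smul_eq_mul]
  rw [Finset.sum_congr rfl (g := fun _ => lam v)]
  · rw [Finset.sum_const, nsmul_eq_mul, ← mul_assoc, inv_mul_cancel₀ (card_Unip_ne_zero n), one_mul]
  · intro u hu
    rw [h u (mem_UnipFinset.1 hu), ← mul_assoc, inv_mul_cancel₀ (psiN_ne_zero _ _), one_mul]

lemma bessel_eq (g : GL (Fin n) F) :
    Bessel π (psiN ψ) g = LinearMap.trace ℂ V (π g * eOp π (psiN ψ)) := by
  unfold Bessel eOp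
  rw [mul_smul_comm, map_smul, smul_eq_mul]
  congr 1
  rw [Finset.mul_sum, map_sum]
  refine Finset.sum_congr rfl fun u _ => ?_
  rw [mul_smul_comm, map_smul, smul_eq_mul, map_mul, mul_comm]

end eOp

/-! ### Multiplicity one for Whittaker functionals -/

lemma isUnip_one_add {n : ℕ} {N : Matrix (Fin n) (Fin n) F}
    (h : ∀ i j : Fin n, (j : ℕ) ≤ i → N i j = 0) : IsUnip F (1 + N) := by
  constructor
  · intro i; simp [h i i le_rfl]
  · intro i j hij
    have : i ≠ j := by intro h'; subst h'; omega
    simp [h i j hij.le, Matrix.one_apply_ne this]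

lemma superdiag_one_add {n : ℕ} (N : Matrix (Fin n) (Fin n) F) :
    superdiag F (1 + N) = superdiag F N := by
  unfold superdiag
  refine Finset.sum_congr rfl fun i _ => Finset.sum_congr rfl fun j _ => ?_
  split_ifs with h
  · have : i ≠ j := by intro h'; subst h'; omega
    simp [Matrix.one_apply_ne this]
  · rfl

lemma isUnip_nu {n : ℕ} {N : Matrix (Fin n) (Fin n) F} (hN : N * N = 0)
    (h : ∀ i j : Fin n, (j : ℕ) ≤ i → N i j = 0) :
    IsUnip F ((nu N : GL (Fin n) F) : Matrix (Fin n) (Fin n) F) := by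
  rw [nu_val hN]; exact isUnip_one_add h

lemma psiN_nu (ψ : AddChar F ℂˣ) {n : ℕ} {N : Matrix (Fin n) (Fin n) F} (hN : N * N = 0) :
    psiN ψ (nu N) = ps ψ (superdiag F N) := by
  rw [psiN_eq, nu_val hN, superdiag_one_add]

/-- Reflection in the antidiagonal. -/
def iotaM {n : ℕ} (M : Matrix (Fin n) (Fin n) F) : Matrix (Fin n) (Fin n) F :=
  fun i j => M j.rev i.rev

lemma iotaM_mul {n : ℕ} (A B : Matrix (Fin n) (Fin n) F) : iotaM (A * B) = iotaM B * iotaM A := by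
  ext i j
  simp only [iotaM, Matrix.mul_apply]
  rw [← Equiv.sum_comp Fin.revPerm]
  refine Finset.sum_congr rfl fun k _ => ?_
  simp [mul_comm]

lemma iotaM_one {n : ℕ} : iotaM (1 : Matrix (Fin n) (Fin n) F) = 1 := by
  ext i j
  simp only [iotaM, Matrix.one_apply, Fin.rev_inj]
  simp only [eq_comm]

/-- Reflection in the antidiagonal, on the group. -/
def iota {n : ℕ} (g : GL (Fin n) F) : GL (Fin n) F where
  val := iotaM g.val
  inv := iotaM g.inv
  val_inv := by rw [← iotaM_mul, g.inv_val, iotaM_one]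
  inv_val := by rw [← iotaM_mul, g.val_inv, iotaM_one]

lemma iota_val {n : ℕ} (g : GL (Fin n) F) :
    ((iota g : GL (Fin n) F) : Matrix (Fin n) (Fin n) F) = iotaM (g : Matrix (Fin n) (Fin n) F) :=
  rfl

lemma iota_mul {n : ℕ} (a b : GL (Fin n) F) : iota (a * b) = iota b * iota a := by
  apply Units.ext
  simp only [iota_val, Units.val_mul, iotaM_mul]

lemma iota_iota {n : ℕ} (a : GL (Fin n) F) : iota (iota a) = a := by
  apply Units.ext
  ext i j
  simp [iota_val, iotaM]

lemma iota_unip {n : ℕ} {u : GL (Fin n) F} (hu : IsUnip F (u : Matrix (Fin n) (Fin n) F)) :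
    IsUnip F ((iota u : GL (Fin n) F) : Matrix (Fin n) (Fin n) F) := by
  constructor
  · intro i; rw [iota_val, iotaM, hu.1]
  · intro i j h
    rw [iota_val, iotaM, hu.2]
    simp only [Fin.val_rev]
    omega

lemma iota_psiN (ψ : AddChar F ℂˣ) {n : ℕ} (u : GL (Fin n) F) : psiN ψ (iota u) = psiN ψ u := by
  rw [psiN_eq, psiN_eq]
  congr 1
  unfold superdiag
  rw [Finset.sum_comm, ← Equiv.sum_comp Fin.revPerm]
  refine Finset.sum_congr rfl fun i _ => ?_
  rw [← Equiv.sum_comp Fin.revPerm]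
  refine Finset.sum_congr rfl fun j _ => ?_
  simp only [iota_val, iotaM, Fin.revPerm_apply, Fin.rev_rev, Fin.val_rev]
  refine if_congr ?_ rfl rfl
  omega

/-- Bruhat decomposition, inductive form. -/
lemma bruhat_aux {n : ℕ} (x : GL (Fin n) F) (j : ℕ) (hj : j ≤ n) :
    ∃ u u' : GL (Fin n) F, IsUnip F (u : Matrix (Fin n) (Fin n) F) ∧
      IsUnip F (u' : Matrix (Fin n) (Fin n) F) ∧
      ∀ b : Fin n, (b : ℕ) < j → ∃ r, (u * x * u').val r b ≠ 0 ∧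
        (∀ i, i ≠ r → (u * x * u').val i b = 0) ∧ (∀ k, k ≠ b → (u * x * u').val r k = 0) := by
  induction j with
  | zero => exact ⟨1, 1, by simpa using IsUnip.one, by simpa using IsUnip.one, by simp⟩
  | succ j ih =>
    obtain ⟨u, u', hu, hu', H⟩ := ih (by omega)
    generalize hh : u * x * u' = h at H
    let J : Fin n := ⟨j, by omega⟩
    -- the pivot
    have hne : ∃ r, h.val r J ≠ 0 := by
      by_contra hcon
      push Not at hcon
      have h1 : (h⁻¹.val * h.val) J J = 1 := by
        rw [← Units.val_mul, inv_mul_cancel]; simp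
      rw [Matrix.mul_apply] at h1
      simp [hcon] at h1
    obtain ⟨r, hr, hmax⟩ : ∃ r, h.val r J ≠ 0 ∧ ∀ i, r < i → h.val i J = 0 := by
      classical
      obtain ⟨r, hr, hm⟩ := Finset.exists_max_image
        (Finset.univ.filter fun r => h.val r J ≠ 0) (fun r => r)
        (by obtain ⟨r, hr⟩ := hne; exact ⟨r, by simpa using hr⟩)
      refine ⟨r, by simpa using hr, fun i hi => ?_⟩
      by_contra hcon
      have := hm i (by simpa using hcon)
      exact absurd this (not_le.2 hi)
    let N : Matrix (Fin n) (Fin n) F := fun i k =>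
      if k = r then (if i < r then -h.val i J / h.val r J else 0) else 0
    let N' : Matrix (Fin n) (Fin n) F := fun i k =>
      if i = J then (if J < k then -h.val r k / h.val r J else 0) else 0
    have hN : N * N = 0 := by
      ext i k
      rw [Matrix.mul_apply]
      refine Finset.sum_eq_zero fun l _ => ?_
      by_cases h1 : l = r
      · have : N l k = 0 := by simp [N, h1]
        rw [this, mul_zero]
      · have : N i l = 0 := by simp [N, h1]
        rw [this, zero_mul]
    have hN' : N' * N' = 0 := by
      ext i k
      rw [Matrix.mul_apply]
      refine Finset.sum_eq_zero fun l _ => ?_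
      by_cases h1 : l = J
      · have : N' i l = 0 := by simp [N', h1]
        rw [this, zero_mul]
      · have : N' l k = 0 := by simp [N', h1]
        rw [this, mul_zero]
    have hUN : IsUnip F ((nu N : GL (Fin n) F) : Matrix (Fin n) (Fin n) F) := by
      apply isUnip_nu hN
      intro i k hik
      by_cases h1 : k = r
      · have : ¬ i < r := by rw [← h1, Fin.lt_def]; omega
        simp [N, this]
      · simp [N, h1]
    have hUN' : IsUnip F ((nu N' : GL (Fin n) F) : Matrix (Fin n) (Fin n) F) := by
      apply isUnip_nu hN'
      intro i k hik
      by_cases h1 : i = J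
      · have : ¬ J < k := by rw [← h1, Fin.lt_def]; omega
        simp [N', this]
      · simp [N', h1]
    refine ⟨nu N * u, u' * nu N', ?_, ?_, ?_⟩
    · rw [Units.val_mul]; exact hUN.mul hu
    · rw [Units.val_mul]; exact hu'.mul hUN'
    have hre : nu N * u * x * (u' * nu N') = nu N * h * nu N' := by
      rw [← hh]; simp only [mul_assoc]
    rw [hre]
    have e1 : ∀ i k, (nu N * h).val i k =
        h.val i k + (if i < r then -h.val i J / h.val r J else 0) * h.val r k := by
      intro i k
      rw [Units.val_mul, nu_val hN, add_mul, one_mul, Matrix.add_apply, Matrix.mul_apply,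
        Finset.sum_eq_single r]
      · simp [N]
      · intro l _ hl; simp [N, hl]
      · simp
    have e2 : ∀ i k, (nu N * h * nu N').val i k =
        (nu N * h).val i k + (nu N * h).val i J *
          (if J < k then -h.val r k / h.val r J else 0) := by
      intro i k
      rw [Units.val_mul _ (nu N'), nu_val hN', mul_add, mul_one, Matrix.add_apply,
        Matrix.mul_apply, Finset.sum_eq_single J]
      · simp [N']
      · intro l _ hl; simp [N', hl]
      · simp
    have e3 : ∀ i, (nu N * h).val i J = if i = r then h.val r J else 0 := by
      intro i
      rw [e1]
      rcases lt_trichotomy i r with h1 | h1 | h1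
      · rw [if_pos h1, if_neg h1.ne]; field_simp; ring
      · subst h1; simp
      · rw [if_neg h1.not_gt, if_neg h1.ne', hmax i h1]; simp
    -- row r vanishes in earlier columns
    have hrow : ∀ b : Fin n, (b : ℕ) < j → h.val r b = 0 := by
      intro b hb
      obtain ⟨s, h1, h2, h3⟩ := H b hb
      apply h2
      intro h4
      subst h4
      exact hr (h3 J (by intro h5; rw [← h5] at hb; simp [J] at hb))
    intro b hb
    by_cases hbJ : b = J
    · subst hbJ
      refine ⟨r, ?_, ?_, ?_⟩
      · rw [e2, e3]; simpa using hr
      · intro i hi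
        rw [e2, e3]; simp [hi]
      · intro k hk
        rw [e2, e3, e1]
        rcases lt_or_gt_of_ne hk with h1 | h1
        · rw [if_neg h1.not_gt, hrow k h1]; simp
        · rw [if_pos h1]; simp; field_simp; ring
    · have hb' : (b : ℕ) < j := by
        have : (b : ℕ) ≠ j := fun h => hbJ (Fin.ext h)
        omega
      obtain ⟨s, h1, h2, h3⟩ := H b hb'
      have hnJ : ¬ J < b := by rw [Fin.lt_def]; simp [J]; omega
      have e4 : ∀ i, (nu N * h * nu N').val i b = h.val i b := by
        intro i
        rw [e2, e1, hrow b hb', if_neg hnJ]; simp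
      have hsJ : h.val s J = 0 := h3 J (fun h => hbJ h.symm)
      have hsr : s ≠ r := fun h => hr (h ▸ hsJ)
      refine ⟨s, ?_, ?_, ?_⟩
      · rw [e4]; exact h1
      · intro i hi; rw [e4]; exact h2 i hi
      · intro k hk
        rw [e2, e3, e1, if_neg hsr, hsJ, h3 k hk]; simp

lemma bruhat {n : ℕ} (x : GL (Fin n) F) :
    ∃ u u' : GL (Fin n) F, IsUnip F (u : Matrix (Fin n) (Fin n) F) ∧
      IsUnip F (u' : Matrix (Fin n) (Fin n) F) ∧
      ∃ (w : Fin n → Fin n) (c : Fin n → F), Function.Injective w ∧ (∀ b, c b ≠ 0) ∧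
        ∀ i b, (u * x * u').val i b = if i = w b then c b else 0 := by
  obtain ⟨u, u', hu, hu', H⟩ := bruhat_aux x n le_rfl
  refine ⟨u, u', hu, hu', ?_⟩
  choose w h1 h2 h3 using fun b : Fin n => H b b.2
  refine ⟨w, fun b => (u * x * u').val (w b) b, ?_, h1, ?_⟩
  · intro a b hab
    by_contra hne
    exact h1 a (by rw [hab]; exact h3 b a hne)
  · intro i b
    split_ifs with h
    · rw [h]
    · exact h2 b i h

/-- The combinatorial fact on permutations: layered permutations are involutions. -/
lemma layered_chain {n : ℕ} (σ : Fin n → Fin n) (hσ : Function.Bijective σ)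
    (H : ∀ a b : Fin n, a < b → σ b < σ a → ((b : ℕ) = a + 1 ↔ (σ a : ℕ) = σ b + 1)) :
    ∀ s : Fin n, ∀ i : ℕ, ∀ h : (s : ℕ) + i ≤ σ s,
      (σ ⟨s + i, by omega⟩ : ℕ) + i = σ s := by
  intro s
  induction s using WellFoundedLT.induction with
  | _ s IH =>
  intro i
  induction i using Nat.strong_induction_on with
  | _ i0 ih =>
  rcases i0 with _ | i
  · intro h; simp
  intro h
  have ih1 := ih i (by omega) (by omega)
  set t : Fin n := ⟨s + i, by omega⟩ with ht
  obtain ⟨b, hb⟩ := hσ.2 ⟨(σ t : ℕ) - 1, by omega⟩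
  have hbv : (σ b : ℕ) = (σ t : ℕ) - 1 := by rw [hb]
  have key : (b : ℕ) = s + i + 1 := by
    rcases lt_trichotomy (b : ℕ) (s + i) with h1 | h1 | h1
    · exfalso
      by_cases h2 : (b : ℕ) < s
      · have := IH b h2 ((s : ℕ) - b) (by omega)
        have h3 : (⟨(b : ℕ) + ((s : ℕ) - b), by omega⟩ : Fin n) = s := by
          apply Fin.ext; simp; omega
        rw [h3] at this
        omega
      · have := ih ((b : ℕ) - s) (by omega) (by omega)
        have h3 : (⟨(s : ℕ) + ((b : ℕ) - s), by omega⟩ : Fin n) = b := by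
          apply Fin.ext; simp; omega
        rw [h3] at this
        omega
    · exfalso
      have : b = t := Fin.ext h1
      rw [this] at hbv
      omega
    · have := (H t b (by rw [Fin.lt_def]; exact h1) (by rw [Fin.lt_def]; omega)).2 (by omega)
      rw [this]
  have h4 : (⟨(s : ℕ) + (i + 1), by omega⟩ : Fin n) = b := by
    apply Fin.ext; simp; omega
  rw [h4]
  omega

lemma layered_invol {n : ℕ} (σ : Fin n → Fin n) (hσ : Function.Bijective σ) (c : Fin n → F)
    (H : ∀ a b : Fin n, a < b → σ b < σ a → ((b : ℕ) = a + 1 ↔ (σ a : ℕ) = σ b + 1))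
    (Hc : ∀ a b : Fin n, (b : ℕ) = a + 1 → σ b < σ a → c a = c b) :
    ∀ s, σ (σ s) = s ∧ c (σ s) = c s := by
  have ch := layered_chain σ hσ H
  have big : ∀ s, s ≤ σ s → σ (σ s) = s ∧ c (σ s) = c s := by
    intro s hs
    rw [Fin.le_def] at hs
    have h3 : (⟨(s : ℕ) + ((σ s : ℕ) - s), by omega⟩ : Fin n) = σ s := by
      apply Fin.ext; simp; omega
    constructor
    · have := ch s ((σ s : ℕ) - s) (by omega)
      rw [h3] at this
      apply Fin.ext; omega
    · have : ∀ i : ℕ, ∀ h : (s : ℕ) + i ≤ σ s, c ⟨s + i, by omega⟩ = c s := by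
        intro i
        induction i with
        | zero => intro h; simp
        | succ i ih =>
          intro h
          rw [← ih (by omega)]
          symm
          apply Hc
          · simp; omega
          · have h1 := ch s i (by omega)
            have h2 := ch s (i + 1) (by omega)
            rw [Fin.lt_def]; omega
      rw [← this ((σ s : ℕ) - s) (by omega), h3]
  intro s
  rcases le_or_gt s (σ s) with h | h
  · exact big s h
  · rcases le_or_gt (σ s) (σ (σ s)) with h' | h'
    · obtain ⟨h1, h2⟩ := big _ h'
      have h3 := hσ.1 h1
      refine ⟨h3, ?_⟩
      rw [h3] at h2
      exact h2.symm
    · exfalso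
      -- descend
      have desc : ∀ t : Fin n, ¬ (σ t < t) ∨ ¬ (σ (σ t) < σ t) := by
        intro t
        induction ht : (t : ℕ) using Nat.strong_induction_on generalizing t with
        | _ t0 IH =>
        subst ht
        by_contra hcon
        push Not at hcon
        rcases IH (σ t) hcon.1 (σ t) rfl with h1 | h1
        · exact h1 hcon.2
        · have h2 : σ (σ t) ≤ σ (σ (σ t)) := not_lt.1 h1
          have h3 := hσ.1 (big _ h2).1
          have h4 := hσ.1 h3
          exact absurd hcon.1 (lt_asymm (by simpa only [h4] using hcon.2))
      rcases desc s with h1 | h1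
      · exact h1 h
      · exact h1 h'
lemma superdiag_single {n : ℕ} (a b : Fin n) (t : F) :
    superdiag F (Matrix.single a b t) = t * (if (b : ℕ) = a + 1 then 1 else 0) := by
  unfold superdiag
  rw [Finset.sum_eq_single a, Finset.sum_eq_single b]
  · simp
  · intro k _ hk
    rw [Matrix.single_apply_of_ne _ _ _ _ _ (by tauto)]; simp
  · simp
  · intro i _ hi
    refine Finset.sum_eq_zero fun k _ => ?_
    rw [Matrix.single_apply_of_ne _ _ _ _ _ (by tauto)]; simp
  · simp

lemma single_sq {n : ℕ} {a b : Fin n} (hab : a < b) (t : F) :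
    (Matrix.single a b t : Matrix (Fin n) (Fin n) F) * Matrix.single a b t = 0 :=
  Matrix.single_mul_single_of_ne _ _ _ _ hab.ne' _

lemma single_upper {n : ℕ} {a b : Fin n} (hab : a < b) (t : F) :
    ∀ i j : Fin n, (j : ℕ) ≤ i → (Matrix.single a b t : Matrix (Fin n) (Fin n) F) i j = 0 := by
  intro i j hij
  apply Matrix.single_apply_of_ne
  rintro ⟨rfl, rfl⟩
  rw [Fin.lt_def] at hab
  omega

/-- Bi-equivariance of a function under the unipotent group. -/
def BiEq (ψ : AddChar F ℂˣ) {n : ℕ} {E : Type*} [AddCommGroup E] [Module ℂ E]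
    (Φ : GL (Fin n) F → E) : Prop :=
  ∀ u x : GL (Fin n) F, IsUnip F (u : Matrix (Fin n) (Fin n) F) →
    Φ (u * x) = psiN ψ u • Φ x ∧ Φ (x * u) = psiN ψ u • Φ x

lemma mono_relevant {ψ : AddChar F ℂˣ} (hψ : ∃ a : F, ψ a ≠ 1) {n : ℕ} {E : Type*}
    [AddCommGroup E] [Module ℂ E] {Φ : GL (Fin n) F → E} (hΦ : BiEq ψ Φ)
    (d : GL (Fin n) F) (w : Fin n → Fin n) (c : Fin n → F) (hw : Function.Injective w)
    (hc : ∀ b, c b ≠ 0) (hd : ∀ i b, d.val i b = if i = w b then c b else 0) (h0 : Φ d ≠ 0) :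
    iota d = d := by
  have key : ∀ a b : Fin n, a < b → w a < w b →
      ((if (b : ℕ) = a + 1 then 1 else 0) : F) =
        c a / c b * (if (w b : ℕ) = w a + 1 then 1 else 0) := by
    intro a b hab hwab
    apply ps_inj hψ
    intro t
    have hcomm : d * nu (Matrix.single a b t) =
        nu (Matrix.single (w a) (w b) (t * (c a / c b))) * d := by
      apply Units.ext
      rw [Units.val_mul, Units.val_mul, nu_val (single_sq hab t), nu_val (single_sq hwab _),
        mul_add, add_mul, mul_one, one_mul]
      congr 1
      ext i k
      by_cases hk : k = b
      · subst hk
        rw [Matrix.mul_single_apply_same]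
        by_cases hi : i = w a
        · subst hi
          rw [Matrix.single_mul_apply_same, hd, hd, if_pos rfl, if_pos rfl]
          have := hc k
          field_simp
        · rw [Matrix.single_mul_apply_of_ne (h := hi), hd, if_neg hi, zero_mul]
      · rw [Matrix.mul_single_apply_of_ne (hbj := hk)]
        by_cases hi : i = w a
        · subst hi
          rw [Matrix.single_mul_apply_same, hd, if_neg, mul_zero]
          intro h; exact hk (hw h).symm
        · rw [Matrix.single_mul_apply_of_ne (h := hi)]
    have h1 := (hΦ _ d (isUnip_nu (single_sq hab t) (single_upper hab t))).2
    have h2 := (hΦ _ d (isUnip_nu (single_sq hwab (t * (c a / c b))) (single_upper hwab _))).1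
    rw [hcomm, h2, psiN_nu _ (single_sq hab t), psiN_nu _ (single_sq hwab _)] at h1
    have h3 := smul_left_injective ℂ h0 h1
    rw [superdiag_single, superdiag_single, mul_assoc] at h3
    exact h3.symm
  have key1 : ∀ a b : Fin n, a < b → w a < w b → ((b : ℕ) = a + 1 ↔ (w b : ℕ) = w a + 1) := by
    intro a b h1 h2
    have := key a b h1 h2
    have hq : c a / c b ≠ 0 := div_ne_zero (hc a) (hc b)
    constructor
    · intro h3
      by_contra h4
      rw [if_pos h3, if_neg h4] at this
      simp at this
    · intro h3
      by_contra h4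
      rw [if_neg h4, if_pos h3, mul_one] at this
      exact hq this.symm
  have hbij : Function.Bijective fun a => (w a).rev :=
    (Finite.injective_iff_bijective).1 (Fin.rev_injective.comp hw)
  have inv := layered_invol (fun a => (w a).rev) hbij c
    (by
      intro a b h1 h2
      rw [Fin.rev_lt_rev] at h2
      rw [key1 a b h1 h2]
      simp only [Fin.val_rev]
      have := (w a).2
      have := (w b).2
      omega)
    (by
      intro a b h1 h2
      rw [Fin.rev_lt_rev] at h2
      have hab : a < b := by rw [Fin.lt_def]; omega
      have := key a b hab h2
      rw [if_pos h1, if_pos ((key1 a b hab h2).1 h1), mul_one] at this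
      have h3 := hc b
      field_simp at this
      exact this.symm)
  apply Units.ext
  ext i j
  rw [iota_val, iotaM, hd, hd]
  have e1 : j.rev = w i.rev ↔ i = w j := by
    constructor
    · intro h
      have h1 : j = (w i.rev).rev := by rw [← h, Fin.rev_rev]
      have h2 := (inv i.rev).1
      rw [← h1] at h2
      exact (Fin.rev_injective h2).symm
    · intro h
      have h1 := (inv j).1
      rw [← h] at h1
      rw [← h1, Fin.rev_rev]
  by_cases h : i = w j
  · rw [if_pos h, if_pos (e1.2 h)]
    have := (inv j).2
    rw [← h] at this
    exact this
  · rw [if_neg h, if_neg (fun h' => h (e1.1 h'))]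

lemma biEq_iota {ψ : AddChar F ℂˣ} (hψ : ∃ a : F, ψ a ≠ 1) {n : ℕ} {E : Type*}
    [AddCommGroup E] [Module ℂ E] {Φ : GL (Fin n) F → E} (hΦ : BiEq ψ Φ) (x : GL (Fin n) F) :
    Φ (iota x) = Φ x := by
  obtain ⟨u, u', hu, hu', w, c, hw, hc, hd⟩ := bruhat x
  have hΦ' : BiEq ψ (fun x => Φ (iota x)) := by
    intro u x hu
    simp only [iota_mul]
    rw [(hΦ _ _ (iota_unip hu)).1, (hΦ _ _ (iota_unip hu)).2, iota_psiN]
    exact ⟨rfl, rfl⟩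
  have main : Φ (iota (u * x * u')) = Φ (u * x * u') := by
    by_cases h : Φ (u * x * u') = 0
    · rw [h]
      by_contra h1
      have := mono_relevant hψ hΦ' _ w c hw hc hd h1
      rw [this] at h1
      exact h1 h
    · rw [mono_relevant hψ hΦ _ w c hw hc hd h]
  rw [iota_mul, iota_mul, (hΦ _ _ (iota_unip hu')).1, (hΦ _ _ (iota_unip hu)).2,
    (hΦ _ _ hu').2, (hΦ _ _ hu).1, iota_psiN, iota_psiN] at main
  have h1 := smul_right_injective E (psiN_ne_zero ψ u') main
  exact smul_right_injective E (psiN_ne_zero ψ u) h1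

section MO
variable {n : ℕ} {V : Type*} [AddCommGroup V] [Module ℂ V]
    (π : Representation ℂ (GL (Fin n) F) V) (ψ : AddChar F ℂˣ)

/-- The compressed operators `e π(g) e`. -/
noncomputable def comp (g : GL (Fin n) F) : Module.End ℂ V :=
  eOp π (psiN ψ) * π g * eOp π (psiN ψ)

lemma comp_biEq : BiEq ψ (comp π ψ) := by
  intro u x hu
  unfold comp
  constructor
  · rw [map_mul, ← mul_assoc, eOp_mul π ψ hu, smul_mul_assoc, smul_mul_assoc]
  · rw [map_mul, mul_assoc, mul_assoc, mul_eOp π ψ hu, mul_smul_comm, mul_smul_comm, ← mul_assoc]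

lemma eOp_idem : eOp π (psiN ψ) * eOp π (psiN ψ) = eOp π (psiN ψ) := by
  nth_rewrite 1 [eOp]
  rw [smul_mul_assoc, Finset.sum_mul, Finset.sum_congr rfl (g := fun _ => eOp π (psiN ψ))]
  · rw [Finset.sum_const, ← Nat.cast_smul_eq_nsmul ℂ, smul_smul,
      inv_mul_cancel₀ (card_Unip_ne_zero n), one_smul]
  · intro u hu
    rw [smul_mul_assoc, mul_eOp π ψ (mem_UnipFinset.1 hu), smul_smul,
      inv_mul_cancel₀ (psiN_ne_zero _ _), one_smul]

lemma comp_mul (g h : GL (Fin n) F) : comp π ψ g * comp π ψ h =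
    ((UnipFinset F n).card : ℂ)⁻¹ • ∑ u ∈ UnipFinset F n, (psiN ψ u)⁻¹ • comp π ψ (g * u * h) := by
  have : comp π ψ g * comp π ψ h =
      eOp π (psiN ψ) * π g * (eOp π (psiN ψ) * eOp π (psiN ψ)) * π h * eOp π (psiN ψ) := by
    unfold comp; simp only [mul_assoc]
  rw [this, eOp_idem]
  conv_lhs => enter [1, 1, 2]; rw [eOp]
  rw [mul_smul_comm, smul_mul_assoc, smul_mul_assoc, Finset.mul_sum, Finset.sum_mul,
    Finset.sum_mul]
  congr 1
  refine Finset.sum_congr rfl fun u _ => ?_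
  rw [mul_smul_comm, smul_mul_assoc, smul_mul_assoc, comp, map_mul, map_mul]
  simp only [mul_assoc]

lemma comp_comm (hψ : ∃ a : F, ψ a ≠ 1) (g h : GL (Fin n) F) :
    comp π ψ g * comp π ψ h = comp π ψ h * comp π ψ g := by
  have hb := biEq_iota hψ (comp_biEq π ψ)
  have : comp π ψ h * comp π ψ g = comp π ψ (iota h) * comp π ψ (iota g) := by rw [hb, hb]
  rw [this, comp_mul, comp_mul]
  congr 1
  refine Finset.sum_nbij' iota iota ?_ ?_ ?_ ?_ ?_
  · intro u hu; exact mem_UnipFinset.2 (iota_unip (mem_UnipFinset.1 hu))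
  · intro u hu; exact mem_UnipFinset.2 (iota_unip (mem_UnipFinset.1 hu))
  · intro u _; exact iota_iota u
  · intro u _; exact iota_iota u
  · intro u _
    rw [iota_psiN, ← iota_mul, ← iota_mul, hb, ← mul_assoc]

lemma orbit_span (hirr : IsIrreducible π) {v : V} (hv : v ≠ 0) :
    Submodule.span ℂ (Set.range fun g => π g v) = ⊤ := by
  have hinv : ∀ g x, x ∈ Submodule.span ℂ (Set.range fun g => π g v) →
      π g x ∈ Submodule.span ℂ (Set.range fun g => π g v) := by
    intro g x hx
    induction hx using Submodule.span_induction with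
    | mem x hx =>
      obtain ⟨h, rfl⟩ := hx
      refine Submodule.subset_span ⟨g * h, ?_⟩
      simp
    | zero => simp
    | add x y _ _ hx hy => rw [map_add]; exact Submodule.add_mem _ hx hy
    | smul a x _ hx => rw [map_smul]; exact Submodule.smul_mem _ _ hx
  rcases hirr _ hinv with h | h
  · exfalso
    have : π 1 v ∈ Submodule.span ℂ (Set.range fun g => π g v) :=
      Submodule.subset_span ⟨1, rfl⟩
    rw [h] at this
    simp at this
    exact hv this
  · exact h

lemma eOp_range {v : V} (hv : eOp π (psiN ψ) v = v) (h : GL (Fin n) F) :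
    eOp π (psiN ψ) (π h v) = comp π ψ h v := by
  simp only [comp, Module.End.mul_apply]
  rw [hv]

lemma comp_scalar [FiniteDimensional ℂ V] (hψ : ∃ a : F, ψ a ≠ 1) (hirr : IsIrreducible π)
    {v : V} (hv0 : v ≠ 0) (hv : eOp π (psiN ψ) v = v) (g : GL (Fin n) F) :
    ∃ α : ℂ, ∀ x, comp π ψ g x = α • eOp π (psiN ψ) x := by
  let R : Submodule ℂ V := LinearMap.range (eOp π (psiN ψ))
  have hR : ∀ x ∈ R, comp π ψ g x ∈ R := by
    intro x _
    simp only [comp, Module.End.mul_apply]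
    exact ⟨_, rfl⟩
  have hRe : ∀ x ∈ R, eOp π (psiN ψ) x = x := by
    rintro x ⟨y, rfl⟩
    rw [← Module.End.mul_apply, eOp_idem]
  have : Nontrivial R := ⟨⟨⟨v, ⟨v, hv⟩⟩, 0, by simpa [Subtype.ext_iff] using hv0⟩⟩
  obtain ⟨α, hα⟩ := Module.End.exists_eigenvalue ((comp π ψ g).restrict hR)
  obtain ⟨⟨x, hx⟩, hx1⟩ := hα.exists_hasEigenvector
  have hx0 : x ≠ 0 := by
    intro h; apply hx1.2; exact Subtype.ext h
  have hx2 : comp π ψ g x = α • x := by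
    have := congrArg Subtype.val hx1.apply_eq_smul
    simpa using this
  refine ⟨α, fun y => ?_⟩
  have hy : y ∈ Submodule.span ℂ (Set.range fun g => π g x) := by
    rw [orbit_span π hirr hx0]; trivial
  induction hy using Submodule.span_induction with
  | mem y hy =>
    obtain ⟨h, rfl⟩ := hy
    have h1 : comp π ψ g (π h x) = comp π ψ g (eOp π (psiN ψ) (π h x)) := by
      simp only [comp, Module.End.mul_apply]
      rw [← Module.End.mul_apply (eOp π (psiN ψ)) (eOp π (psiN ψ)), eOp_idem]
    simp only
    rw [h1, eOp_range π ψ (hRe x hx), ← Module.End.mul_apply, comp_comm π ψ hψ,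
      Module.End.mul_apply, hx2, map_smul]
  | zero => simp
  | add a b _ _ ha hb => rw [map_add, map_add, ha, hb, smul_add]
  | smul c a _ ha => rw [map_smul, map_smul, ha, smul_comm]

/-- Multiplicity one. -/
theorem mult_one [FiniteDimensional ℂ V] (hψ : ∃ a : F, ψ a ≠ 1) (hirr : IsIrreducible π)
    {lam : V →ₗ[ℂ] ℂ} (hlam : IsWhittaker π (psiN ψ) lam) (h0 : lam ≠ 0) :
    ∃ v0 : V, (∀ v, eOp π (psiN ψ) v = lam v • v0) ∧ lam v0 = 1 := by
  obtain ⟨v, hv⟩ : ∃ v, lam v ≠ 0 := by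
    by_contra h
    push Not at h
    exact h0 (LinearMap.ext h)
  set v0 := (lam v)⁻¹ • eOp π (psiN ψ) v with hv0
  have h1 : lam v0 = 1 := by
    rw [hv0, map_smul, whittaker_eOp π ψ hlam, smul_eq_mul, inv_mul_cancel₀ hv]
  have h2 : eOp π (psiN ψ) v0 = v0 := by
    rw [hv0, map_smul, ← Module.End.mul_apply, eOp_idem]
  have h3 : v0 ≠ 0 := by intro h; rw [h] at h1; simp at h1
  refine ⟨v0, fun x => ?_, h1⟩
  have hx : x ∈ Submodule.span ℂ (Set.range fun g => π g v0) := by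
    rw [orbit_span π hirr h3]; trivial
  have : ∃ β : ℂ, eOp π (psiN ψ) x = β • v0 := by
    induction hx using Submodule.span_induction with
    | mem y hy =>
      obtain ⟨h, rfl⟩ := hy
      obtain ⟨α, hα⟩ := comp_scalar π ψ hψ hirr h3 h2 h
      refine ⟨α, ?_⟩
      simp only
      rw [eOp_range π ψ h2, hα, h2]
    | zero => exact ⟨0, by simp⟩
    | add a b _ _ ha hb =>
      obtain ⟨α, ha⟩ := ha
      obtain ⟨β, hb⟩ := hb
      exact ⟨α + β, by rw [map_add, ha, hb, add_smul]⟩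
    | smul c a _ ha =>
      obtain ⟨α, ha⟩ := ha
      exact ⟨c * α, by rw [map_smul, ha, mul_smul]⟩
  obtain ⟨β, hβ⟩ := this
  have h4 := whittaker_eOp π ψ hlam x
  rw [hβ, map_smul, h1, smul_eq_mul, mul_one] at h4
  rw [hβ, h4]

section consequences
variable {π ψ}

lemma mo_vec {lam : V →ₗ[ℂ] ℂ} {v0 : V} (he : ∀ v, eOp π (psiN ψ) v = lam v • v0)
    (h1 : lam v0 = 1) {u : GL (Fin n) F} (hu : IsUnip F (u : Matrix (Fin n) (Fin n) F)) :
    π u v0 = psiN ψ u • v0 := by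
  have h2 : eOp π (psiN ψ) v0 = v0 := by rw [he, h1, one_smul]
  conv_lhs => rw [← h2, ← Module.End.mul_apply, mul_eOp π ψ hu, LinearMap.smul_apply, h2]

lemma mo_unique {lam : V →ₗ[ℂ] ℂ} {v0 : V} (he : ∀ v, eOp π (psiN ψ) v = lam v • v0)
    {ν : V →ₗ[ℂ] ℂ} (hν : IsWhittaker π (psiN ψ) ν) (v : V) :
    ν v = ν v0 * lam v := by
  rw [← whittaker_eOp π ψ hν v, he, map_smul, smul_eq_mul, mul_comm]

lemma mo_bessel {lam : V →ₗ[ℂ] ℂ} {v0 : V} (he : ∀ v, eOp π (psiN ψ) v = lam v • v0)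
    [FiniteDimensional ℂ V] (g : GL (Fin n) F) :
    Bessel π (psiN ψ) g = lam (π g v0) := by
  rw [bessel_eq, ← LinearMap.trace_smulRight lam (π g v0)]
  congr 1
  ext v
  simp [he]

end consequences
end MO

/-! ### Columns -/

/-- Extension by zero of a vector of length `j` to length `n`. -/
def extv {n j : ℕ} (y : Fin j → F) : Fin n → F := fun i => if h : (i : ℕ) < j then y ⟨i, h⟩ else 0

lemma extv_lt {n j : ℕ} (y : Fin j → F) {i : Fin n} (h : (i : ℕ) < j) :
    extv y i = y ⟨i, h⟩ := dif_pos h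

lemma extv_ge {n j : ℕ} (y : Fin j → F) {i : Fin n} (h : j ≤ (i : ℕ)) :
    extv y i = 0 := dif_neg (by omega)

lemma extv_add {n j : ℕ} (y z : Fin j → F) (i : Fin n) :
    extv (y + z) i = extv y i + extv z i := by
  unfold extv; split_ifs <;> simp

lemma sum_extv {n j : ℕ} (hj : j ≤ n) (c : Fin n → F) (y : Fin j → F) :
    ∑ i, c i * extv y i = ∑ i : Fin j, c (Fin.castLE hj i) * y i := by
  symm
  apply Fintype.sum_of_injective (Fin.castLE hj) (Fin.castLE_injective hj)
  · intro i hi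
    rw [extv_ge, mul_zero]
    by_contra h
    exact hi ⟨⟨i, by omega⟩, rfl⟩
  · intro i
    rw [extv_lt y (i := Fin.castLE hj i) i.2]
    rfl

/-- The matrix with column `j` equal to `y` above the diagonal. -/
def colM {n : ℕ} (j : Fin n) (y : Fin (j : ℕ) → F) : Matrix (Fin n) (Fin n) F :=
  fun i k => if k = j then extv y i else 0

lemma colM_sq {n : ℕ} (j : Fin n) (y z : Fin (j : ℕ) → F) : colM j y * colM j z = 0 := by
  ext i k
  rw [Matrix.mul_apply]
  apply Finset.sum_eq_zero
  intro l _
  unfold colM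
  by_cases h : l = j
  · subst h
    rw [extv_ge z le_rfl]; simp
  · simp [h]

lemma colM_upper {n : ℕ} (j : Fin n) (y : Fin (j : ℕ) → F) :
    ∀ i k : Fin n, (k : ℕ) ≤ i → colM j y i k = 0 := by
  intro i k h
  unfold colM
  split_ifs with h1
  · subst h1; exact extv_ge _ h
  · rfl

lemma colM_add {n : ℕ} (j : Fin n) (y z : Fin (j : ℕ) → F) :
    colM j (y + z) = colM j y + colM j z := by
  ext i k
  simp only [colM, Matrix.add_apply, extv_add]
  split_ifs <;> simp

/-- The generic linear form on column `j`. -/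
def a0 {n : ℕ} (j : Fin n) : Fin (j : ℕ) → F := fun i => if (i : ℕ) + 1 = j then 1 else 0

lemma superdiag_colM {n : ℕ} (j : Fin n) (y : Fin (j : ℕ) → F) :
    superdiag F (colM j y) = a0 j ⬝ᵥ y := by
  have : superdiag F (colM j y) = ∑ i : Fin n, (if (i : ℕ) + 1 = j then 1 else 0) * extv y i := by
    unfold superdiag
    refine Finset.sum_congr rfl fun i _ => ?_
    rw [Finset.sum_eq_single j]
    · simp only [colM, if_true, eq_comm]
      split_ifs <;> simp
    · intro k _ hk
      simp [colM, hk]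
    · simp
  rw [this, sum_extv j.2.le]
  rfl

/-- The group element with column `j` equal to `y` above the diagonal. -/
noncomputable def cg {n : ℕ} (j : Fin n) (y : Fin (j : ℕ) → F) : GL (Fin n) F := nu (colM j y)

lemma cg_val {n : ℕ} (j : Fin n) (y : Fin (j : ℕ) → F) :
    (cg j y : GL (Fin n) F).val = 1 + colM j y := nu_val (colM_sq j y y)

lemma cg_add {n : ℕ} (j : Fin n) (y z : Fin (j : ℕ) → F) :
    cg j (y + z) = cg j y * cg j z := by
  unfold cg
  rw [colM_add]
  exact nu_add (colM_sq _ _ _) (colM_sq _ _ _) (colM_sq _ _ _) (colM_sq _ _ _)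

lemma cg_zero {n : ℕ} (j : Fin n) : (cg j 0 : GL (Fin n) F) = 1 := by
  have h := cg_add j (0 : Fin (j : ℕ) → F) 0
  rw [add_zero] at h
  exact (left_eq_mul.1 h)

lemma cg_unip {n : ℕ} (j : Fin n) (y : Fin (j : ℕ) → F) :
    IsUnip F (cg j y : GL (Fin n) F).val := isUnip_nu (colM_sq _ _ _) (colM_upper _ _)

lemma cg_psiN (ψ : AddChar F ℂˣ) {n : ℕ} (j : Fin n) (y : Fin (j : ℕ) → F) :
    psiN ψ (cg j y) = ps ψ (a0 j ⬝ᵥ y) := by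
  unfold cg
  rw [psiN_nu _ (colM_sq _ _ _), superdiag_colM]

/-- The rows of index at least `j` agree with the identity matrix. -/
def RowsUnit {n : ℕ} (j : ℕ) (g : GL (Fin n) F) : Prop :=
  ∀ i k : Fin n, j ≤ (i : ℕ) → g.val i k = (1 : Matrix (Fin n) (Fin n) F) i k

lemma RowsUnit.mono {n i j : ℕ} (h : i ≤ j) {g : GL (Fin n) F} (hg : RowsUnit i g) :
    RowsUnit j g := fun a b hab => hg a b (h.trans hab)

lemma cg_rowsUnit {n : ℕ} (j : Fin n) (y : Fin (j : ℕ) → F) : RowsUnit j (cg j y) := by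
  intro i k hi
  rw [cg_val, Matrix.add_apply, colM]
  split_ifs <;> simp [extv_ge y hi]

/-- The upper left block. -/
def blk {n : ℕ} (j : Fin n) (g : GL (Fin n) F) : Matrix (Fin (j : ℕ)) (Fin (j : ℕ)) F :=
  g.val.submatrix (Fin.castLE j.2.le) (Fin.castLE j.2.le)

lemma colconj {n : ℕ} {j : Fin n} {g : GL (Fin n) F} (hg : RowsUnit j g) (y : Fin (j : ℕ) → F) :
    g * cg j y = cg j (blk j g *ᵥ y) * g := by
  apply Units.ext
  rw [Units.val_mul, Units.val_mul, cg_val, cg_val, mul_add, add_mul, mul_one, one_mul]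
  congr 1
  ext i k
  have h2 : (colM j (blk j g *ᵥ y) * g.val) i k = if k = j then extv (blk j g *ᵥ y) i else 0 := by
    rw [Matrix.mul_apply, Finset.sum_eq_single j]
    · rw [hg j k le_rfl, colM, if_pos rfl, Matrix.one_apply]
      simp only [eq_comm (a := j)]
      split_ifs <;> simp
    · intro l _ hl
      simp [colM, hl]
    · simp
  rw [h2, Matrix.mul_apply]
  by_cases hk : k = j
  · simp only [colM, hk, if_true]
    by_cases hi : (i : ℕ) < j
    · rw [extv_lt _ hi, sum_extv j.2.le]
      rfl
    · rw [extv_ge _ (by omega), Finset.sum_eq_single i]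
      · rw [extv_ge _ (by omega), mul_zero]
      · intro l _ hl
        rw [hg i l (by omega), Matrix.one_apply_ne hl.symm, zero_mul]
      · simp
  · simp [colM, hk]

lemma cg_inj {n : ℕ} (j : Fin n) {y z : Fin (j : ℕ) → F} (h : cg j y = cg j z) : y = z := by
  funext i
  have h0 : (cg j y : GL (Fin n) F).val = (cg j z : GL (Fin n) F).val := by rw [h]
  have := congrFun (congrFun h0 (Fin.castLE j.2.le i)) j
  rw [cg_val, cg_val, Matrix.add_apply, Matrix.add_apply] at this
  have h2 := add_left_cancel this
  simp only [colM, if_true] at h2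
  rwa [extv_lt y (i := Fin.castLE j.2.le i) i.2, extv_lt z (i := Fin.castLE j.2.le i) i.2] at h2

lemma blk_bij {n : ℕ} {j : Fin n} {g : GL (Fin n) F} (hg : RowsUnit j g) :
    Function.Bijective fun y : Fin (j : ℕ) → F => blk j g *ᵥ y := by
  refine (Finite.injective_iff_bijective).1 ?_
  intro y z h
  simp only at h
  apply cg_inj j
  have h2 : g * cg j y = g * cg j z := by rw [colconj hg, colconj hg, h]
  exact mul_left_cancel h2

lemma a0_blk {n : ℕ} {j : Fin n} {g : GL (Fin n) F} (hg : RowsUnit ((j : ℕ) - 1) g) :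
    a0 j ᵥ* blk j g = a0 j := by
  funext l
  have hl := l.2
  have hr : (⟨(j : ℕ) - 1, by omega⟩ : Fin (j : ℕ)) = ⟨(j : ℕ) - 1, by omega⟩ := rfl
  rw [Matrix.vecMul, dotProduct, Finset.sum_eq_single ⟨(j : ℕ) - 1, by omega⟩]
  · rw [blk, Matrix.submatrix_apply, hg _ _ (by simp), Matrix.one_apply]
    simp only [a0, Fin.ext_iff, Fin.val_castLE]
    have e1 : (j : ℕ) - 1 + 1 = j := by omega
    have e2 : ((j : ℕ) - 1 = l) ↔ ((l : ℕ) + 1 = j) := by omega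
    simp only [e1, e2, if_true, one_mul]
  · intro b _ hb
    have : ¬ ((b : ℕ) + 1 = j) := fun h => hb (Fin.ext (by simp; omega))
    simp [a0, this]
  · simp

section Wh
variable {n : ℕ} {V : Type*} [AddCommGroup V] [Module ℂ V]
    (π : Representation ℂ (GL (Fin n) F) V) (ψ : AddChar F ℂˣ)

/-- The projector on the `a`-isotypic part for column `j`. -/
noncomputable def eJ (j : Fin n) (a : Fin (j : ℕ) → F) : Module.End ℂ V :=
  ((Fintype.card F : ℂ) ^ (j : ℕ))⁻¹ • ∑ y : Fin (j : ℕ) → F, ps ψ (-(a ⬝ᵥ y)) • π (cg j y)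

lemma eJ_mul_cg (j : Fin n) (a y : Fin (j : ℕ) → F) :
    eJ π ψ j a * π (cg j y) = ps ψ (a ⬝ᵥ y) • eJ π ψ j a := by
  unfold eJ
  rw [smul_mul_assoc, smul_comm]
  congr 1
  rw [Finset.sum_mul, Finset.smul_sum]
  rw [← Equiv.sum_comp (Equiv.addRight y) (fun z => ps ψ (a ⬝ᵥ y) • ps ψ (-(a ⬝ᵥ z)) • π (cg j z))]
  refine Finset.sum_congr rfl fun z _ => ?_
  rw [Equiv.coe_addRight, cg_add, map_mul, smul_mul_assoc, smul_smul, ← AddChar.map_add_eq_mul,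
    dotProduct_add]
  congr 2
  ring

lemma cg_mul_eJ (j : Fin n) (a y : Fin (j : ℕ) → F) :
    π (cg j y) * eJ π ψ j a = ps ψ (a ⬝ᵥ y) • eJ π ψ j a := by
  rw [← eJ_mul_cg]
  unfold eJ
  rw [mul_smul_comm, smul_mul_assoc, Finset.mul_sum, Finset.sum_mul]
  congr 1
  refine Finset.sum_congr rfl fun z _ => ?_
  rw [mul_smul_comm, smul_mul_assoc, ← map_mul, ← map_mul, ← cg_add, ← cg_add, add_comm]

lemma card_F_ne_zero : (Fintype.card F : ℂ) ≠ 0 := by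
  exact_mod_cast Fintype.card_ne_zero

lemma sum_eJ (hψ : ∃ a : F, ψ a ≠ 1) (j : Fin n) : ∑ a, eJ π ψ j a = 1 := by
  unfold eJ
  rw [← Finset.smul_sum, Finset.sum_comm, Finset.sum_eq_single 0]
  · rw [← Finset.sum_smul, ps_sum hψ, if_pos rfl, smul_smul, inv_mul_cancel₀, one_smul, cg_zero,
      map_one]
    exact pow_ne_zero _ card_F_ne_zero
  · intro y _ hy
    rw [← Finset.sum_smul, ps_sum hψ, if_neg hy, zero_smul]
  · simp

lemma eJ_mul_of_rowsUnit {j : Fin n} {g : GL (Fin n) F} (hg : RowsUnit j g)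
    (b : Fin (j : ℕ) → F) : eJ π ψ j b * π g = π g * eJ π ψ j (b ᵥ* blk j g) := by
  unfold eJ
  rw [smul_mul_assoc, mul_smul_comm, Finset.sum_mul, Finset.mul_sum]
  congr 1
  rw [← (Equiv.ofBijective _ (blk_bij hg)).sum_comp]
  refine Finset.sum_congr rfl fun z _ => ?_
  rw [Equiv.ofBijective_apply, smul_mul_assoc, mul_smul_comm, ← map_mul, ← map_mul, colconj hg,
    Matrix.dotProduct_mulVec]

lemma eJ_comm {j : Fin n} {g : GL (Fin n) F} (hg : RowsUnit ((j : ℕ) - 1) g) :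
    eJ π ψ j (a0 j) * π g = π g * eJ π ψ j (a0 j) := by
  rw [eJ_mul_of_rowsUnit π ψ (hg.mono (by omega)), a0_blk hg]

lemma eJ_fix (j : Fin n) {v : V} (hv : ∀ u : GL (Fin n) F, IsUnip F u.val →
    π u v = psiN ψ u • v) : eJ π ψ j (a0 j) v = v := by
  unfold eJ
  rw [LinearMap.smul_apply, LinearMap.sum_apply, Finset.sum_congr rfl (g := fun _ => v)]
  · rw [Finset.sum_const, ← Nat.cast_smul_eq_nsmul ℂ, smul_smul]
    simp [card_F_ne_zero]
  · intro y _
    rw [LinearMap.smul_apply, hv _ (cg_unip _ _), cg_psiN, smul_smul, ← AddChar.map_add_eq_mul]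
    simp

/-- Functionals equivariant under the columns of index at least `j`. -/
def Wh (j : ℕ) : Submodule ℂ (V →ₗ[ℂ] ℂ) where
  carrier := {l | ∀ r : Fin n, j ≤ (r : ℕ) → ∀ (y : Fin (r : ℕ) → F) (v : V),
    l (π (cg r y) v) = ps ψ (a0 r ⬝ᵥ y) * l v}
  zero_mem' := by intro r _ y v; simp
  add_mem' := by
    intro a b ha hb r hr y v
    rw [LinearMap.add_apply, LinearMap.add_apply, ha r hr, hb r hr, mul_add]
  smul_mem' := by
    intro c a ha r hr y v
    rw [LinearMap.smul_apply, LinearMap.smul_apply, ha r hr, smul_eq_mul, smul_eq_mul]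
    ring

variable {π ψ}

lemma Wh_comp {j : ℕ} {l : V →ₗ[ℂ] ℂ} (hl : l ∈ Wh π ψ (j + 1)) {g : GL (Fin n) F}
    (hg : RowsUnit j g) : l ∘ₗ π g ∈ Wh π ψ (j + 1) := by
  intro r hr y v
  rw [LinearMap.comp_apply, LinearMap.comp_apply, ← Module.End.mul_apply, ← map_mul,
    colconj (hg.mono (by omega)), map_mul, Module.End.mul_apply, hl r hr, dotProduct_mulVec,
    a0_blk (hg.mono (by omega))]

lemma Wh_eJ {j : Fin n} {l : V →ₗ[ℂ] ℂ} (hl : l ∈ Wh π ψ (j + 1)) (a : Fin (j : ℕ) → F) :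
    l ∘ₗ eJ π ψ j a ∈ Wh π ψ (j + 1) := by
  have : l ∘ₗ eJ π ψ j a = ((Fintype.card F : ℂ) ^ (j : ℕ))⁻¹ •
      ∑ y : Fin (j : ℕ) → F, ps ψ (-(a ⬝ᵥ y)) • (l ∘ₗ π (cg j y)) := by
    ext v
    simp [eJ]
  rw [this]
  exact Submodule.smul_mem _ _ (Submodule.sum_mem _ fun y _ => Submodule.smul_mem _ _
    (Wh_comp hl (cg_rowsUnit _ _)))

lemma eJ_apply_cg (j : Fin n) (a y : Fin (j : ℕ) → F) (v : V) :
    eJ π ψ j a (π (cg j y) v) = ps ψ (a ⬝ᵥ y) • eJ π ψ j a v := by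
  rw [← Module.End.mul_apply, eJ_mul_cg, LinearMap.smul_apply]

lemma Wh_eJ0 {j : Fin n} {l : V →ₗ[ℂ] ℂ} (hl : l ∈ Wh π ψ (j + 1)) :
    l ∘ₗ eJ π ψ j (a0 j) ∈ Wh π ψ j := by
  intro r hr y v
  rcases eq_or_lt_of_le hr with h | h
  · have h' : j = r := Fin.ext h
    subst h'
    rw [LinearMap.comp_apply, LinearMap.comp_apply, eJ_apply_cg, map_smul, smul_eq_mul]
  · exact Wh_eJ hl _ r h y v

lemma Wh_whittaker_aux {l : V →ₗ[ℂ] ℂ} (hl : l ∈ Wh π ψ 1) (d : ℕ) (hd : d ≤ n) :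
    ∀ u : GL (Fin n) F, IsUnip F u.val →
      (∀ i k : Fin n, d ≤ (k : ℕ) → u.val i k = (1 : Matrix (Fin n) (Fin n) F) i k) →
      ∀ v, l (π u v) = psiN ψ u * l v := by
  induction d with
  | zero =>
    intro u _ h v
    have : u = 1 := Units.ext (Matrix.ext fun i k => h i k (Nat.zero_le _))
    subst this
    have h2 : psiN ψ (1 : GL (Fin n) F) = 1 := by
      rw [← nu_zero, psiN_nu _ (by simp)]
      simp [superdiag]
    rw [h2]; simp
  | succ d ih =>
    intro u hu hc v
    set r : Fin n := ⟨d, hd⟩ with hr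
    set y : Fin (r : ℕ) → F := fun i => u.val (Fin.castLE r.2.le i) r with hy
    set u' : GL (Fin n) F := cg r (-y) * u with hu'
    have hrow : ∀ k, u.val r k = (1 : Matrix (Fin n) (Fin n) F) r k := by
      intro k
      rcases lt_trichotomy k r with h | h | h
      · rw [hu.2 r k h, Matrix.one_apply_ne h.ne']
      · rw [h, hu.1, Matrix.one_apply_eq]
      · exact hc r k h
    have hval : ∀ i k, u'.val i k = u.val i k - if k = r then extv y i else 0 := by
      intro i k
      rw [hu', Units.val_mul, cg_val, add_mul, one_mul, Matrix.add_apply, sub_eq_add_neg]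
      congr 1
      rw [Matrix.mul_apply, Finset.sum_eq_single r]
      · rw [hrow, Matrix.one_apply, colM, if_pos rfl]
        simp only [eq_comm (a := r)]
        have : extv (-y) i = - extv y i := by unfold extv; split_ifs <;> simp
        rw [this]
        split_ifs <;> simp
      · intro b _ hb
        simp [colM, hb]
      · simp
    have hunip : IsUnip F u'.val := by
      rw [hu', Units.val_mul]; exact (cg_unip _ _).mul hu
    have h1 : ∀ i k : Fin n, d ≤ (k : ℕ) → u'.val i k = (1 : Matrix (Fin n) (Fin n) F) i k := by
      intro i k hk
      rw [hval]
      by_cases hkr : k = r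
      · rw [if_pos hkr, hkr]
        rcases lt_trichotomy i r with h | h | h
        · rw [extv_lt y h, Matrix.one_apply_ne h.ne, hy]
          simp
        · rw [h, hu.1, extv_ge y le_rfl]; simp
        · rw [hu.2 _ _ h, extv_ge y (le_of_lt h), Matrix.one_apply_ne h.ne']; simp
      · rw [if_neg hkr, sub_zero]
        apply hc
        have : (k : ℕ) ≠ d := fun h => hkr (Fin.ext h)
        omega
    have hu2 : u = cg r y * u' := by
      rw [hu', ← mul_assoc, ← cg_add, add_neg_cancel, cg_zero, one_mul]
    rw [hu2, map_mul, Module.End.mul_apply, psiN_mul ψ (cg_unip _ _) hunip, cg_psiN]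
    by_cases h0 : d = 0
    · have : y = 0 := by funext i; exact absurd i.2 (by simp [hr, h0])
      rw [this, cg_zero, map_one, Module.End.one_apply, ih (by omega) _ hunip h1]
      simp
    · rw [hl r (by simp [hr]; omega), ih (by omega) _ hunip h1, mul_assoc]

lemma Wh_whittaker {l : V →ₗ[ℂ] ℂ} (hl : l ∈ Wh π ψ 1) : IsWhittaker π (psiN ψ) l := by
  intro u hu v
  exact Wh_whittaker_aux hl n le_rfl u hu (fun i k h => absurd k.2 (by omega)) v

end Wh

/-! ### Cuspidality -/
section cusp
variable {n : ℕ} {V : Type*} [AddCommGroup V] [Module ℂ V]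
    {π : Representation ℂ (GL (Fin n) F) V} {ψ : AddChar F ℂˣ}

lemma supp_sq {j : ℕ} {X Y : Matrix (Fin n) (Fin n) F}
    (hX : ∀ i k : Fin n, (k : ℕ) < j → X i k = 0) (hY : ∀ i k : Fin n, j ≤ (i : ℕ) → Y i k = 0) :
    X * Y = 0 := by
  ext i k
  rw [Matrix.mul_apply]
  apply Finset.sum_eq_zero
  intro l _
  by_cases h : (l : ℕ) < j
  · rw [hX i l h, zero_mul]
  · rw [hY l k (by omega), mul_zero]

lemma inv_supp {l : V →ₗ[ℂ] ℂ} {j : ℕ}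
    (H : ∀ r : Fin n, j ≤ (r : ℕ) → ∀ y : Fin (r : ℕ) → F, (∀ i : Fin (r : ℕ), j ≤ (i : ℕ) → y i = 0) →
      ∀ v, l (π (cg r y) v) = l v)
    {X : Matrix (Fin n) (Fin n) F} (h1 : ∀ i k : Fin n, (k : ℕ) < j → X i k = 0)
    (h2 : ∀ i k : Fin n, j ≤ (i : ℕ) → X i k = 0) (v : V) : l (π (nu X) v) = l v := by
  classical
  have key : ∀ s : Finset (Fin n), ∀ v,
      l (π (nu (fun i k => if k ∈ s then X i k else 0)) v) = l v := by
    intro s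
    induction s using Finset.induction_on with
    | empty =>
      intro v
      have : (fun i k => if k ∈ (∅ : Finset (Fin n)) then X i k else 0) =
        (0 : Matrix (Fin n) (Fin n) F) := by ext; simp
      rw [this, nu_zero]; simp
    | insert r s hr ih =>
      intro v
      set A : Matrix (Fin n) (Fin n) F := fun i k => if k = r then X i k else 0 with hA
      set B : Matrix (Fin n) (Fin n) F := fun i k => if k ∈ s then X i k else 0 with hB
      have hAB : (fun i k => if k ∈ insert r s then X i k else 0) = A + B := by
        ext i k
        rw [Matrix.add_apply]
        simp only [hA, hB, Finset.mem_insert]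
        by_cases h : k = r
        · subst h; simp [hr]
        · simp [h]
      have a1 : ∀ i k : Fin n, (k : ℕ) < j → A i k = 0 := by
        intro i k h; simp only [hA]; rw [h1 i k h]; simp
      have a2 : ∀ i k : Fin n, j ≤ (i : ℕ) → A i k = 0 := by
        intro i k h; simp only [hA]; rw [h2 i k h]; simp
      have b1 : ∀ i k : Fin n, (k : ℕ) < j → B i k = 0 := by
        intro i k h; simp only [hB]; rw [h1 i k h]; simp
      have b2 : ∀ i k : Fin n, j ≤ (i : ℕ) → B i k = 0 := by
        intro i k h; simp only [hB]; rw [h2 i k h]; simp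
      rw [hAB, nu_add (supp_sq a1 a2) (supp_sq b1 b2) (supp_sq a1 b2) (supp_sq b1 a2), map_mul,
        Module.End.mul_apply]
      refine Eq.trans ?_ (ih v)
      by_cases hj : j ≤ (r : ℕ)
      · have : A = colM r (fun i => X (Fin.castLE r.2.le i) r) := by
          ext i k
          simp only [hA, colM]
          split_ifs with hk
          · by_cases hi : (i : ℕ) < r
            · rw [extv_lt _ hi, hk]; rfl
            · rw [extv_ge _ (by omega), h2 i k (by omega)]
          · rfl
        rw [this]
        exact H r hj _ (fun i hi => h2 _ _ hi) _
      · have : A = 0 := by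
          ext i k
          simp only [hA]
          split_ifs with hk
          · rw [h1 i k (by rw [hk]; omega)]; rfl
          · rfl
        rw [this, nu_zero]; simp
  have := key Finset.univ v
  simpa using this

lemma cusp_kill (hcusp : IsCuspidal π) {j : Fin n} (hj : 1 ≤ (j : ℕ)) {l : V →ₗ[ℂ] ℂ}
    (hl : l ∈ Wh π ψ (j + 1)) (v : V) : l (eJ π ψ j 0 v) = 0 := by
  set l' := l ∘ₗ eJ π ψ j 0 with hl'
  have hw : l' ∈ Wh π ψ (j + 1) := Wh_eJ hl 0
  have hinv : ∀ X : Matrix (Fin n) (Fin n) F, (∀ i k : Fin n, (k : ℕ) < j → X i k = 0) →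
      (∀ i k : Fin n, (j : ℕ) ≤ (i : ℕ) → X i k = 0) → ∀ v, l' (π (nu X) v) = l' v := by
    intro X h1 h2 v
    refine inv_supp (j := j) ?_ h1 h2 v
    intro r hr y hy v
    rcases eq_or_lt_of_le hr with h | h
    · have h' : j = r := Fin.ext h
      subst h'
      rw [hl', LinearMap.comp_apply, LinearMap.comp_apply, eJ_apply_cg]
      simp
    · rw [hw r h]
      have : a0 r ⬝ᵥ y = 0 := by
        rw [dotProduct]
        apply Finset.sum_eq_zero
        intro i _
        by_cases hi : (i : ℕ) + 1 = r
        · rw [hy i (by omega), mul_zero]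
        · simp [a0, hi]
      rw [this]; simp
  have hjn : (j : ℕ) + (n - j) = n := by omega
  have := hcusp j (n - j) hj (by omega) hjn
  have h2 := congrArg (fun T : Module.End ℂ V => l' (T v)) this
  simp only [LinearMap.sum_apply, map_sum, LinearMap.zero_apply, map_zero] at h2
  rw [Finset.sum_congr rfl (g := fun _ => l' v)] at h2
  · rw [Finset.sum_const, nsmul_eq_mul] at h2
    rcases mul_eq_zero.1 h2 with h3 | h3
    · exfalso
      have : (Finset.univ : Finset (Matrix (Fin (j : ℕ)) (Fin (n - j)) F)).card ≠ 0 :=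
        Fintype.card_ne_zero
      exact this (by exact_mod_cast h3)
    · exact h3
  · intro x _
    set e := finSumFinEquiv.trans (finCongr hjn) with he
    have hl1 : ∀ i : Fin n, (i : ℕ) < j → ∃ a, e.symm i = Sum.inl a := by
      intro i hi
      refine ⟨⟨i, hi⟩, ?_⟩
      rw [Equiv.symm_apply_eq]
      ext
      simp [he]
    have hl2 : ∀ i : Fin n, (j : ℕ) ≤ i → ∃ a, e.symm i = Sum.inr a := by
      intro i hi
      refine ⟨⟨i - j, by omega⟩, ?_⟩
      rw [Equiv.symm_apply_eq]
      ext
      simp [he]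
      omega
    have : Matrix.reindex e e (Matrix.fromBlocks 1 x 0 1) =
        1 + Matrix.reindex e e (Matrix.fromBlocks 0 x 0 0) := by
      have h1 : (1 : Matrix (Fin n) (Fin n) F) = Matrix.reindex e e (Matrix.fromBlocks 1 0 0 1) := by
        rw [Matrix.fromBlocks_one]; simp
      rw [h1]
      ext i k
      rw [Matrix.add_apply]
      simp only [Matrix.reindex_apply, Matrix.submatrix_apply]
      rw [← Matrix.add_apply, Matrix.fromBlocks_add]
      simp
    rw [this]
    refine hinv _ ?_ ?_ v
    · intro i k hk
      obtain ⟨a, ha⟩ := hl1 k hk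
      simp only [Matrix.reindex_apply, Matrix.submatrix_apply, ha]
      rcases e.symm i with b | b <;> simp
    · intro i k hk
      obtain ⟨a, ha⟩ := hl2 i hk
      simp only [Matrix.reindex_apply, Matrix.submatrix_apply, ha]
      rcases e.symm k with b | b <;> simp

end cusp

/-! ### Block embedding -/

/-- The matrix `diag(g, 1)`. -/
def embM (n : ℕ) {m : ℕ} (g : Matrix (Fin m) (Fin m) F) : Matrix (Fin n) (Fin n) F :=
  fun i k => if h : (i : ℕ) < m then extv (g ⟨i, h⟩) k else if i = k then 1 else 0

lemma embM_lt {n m : ℕ} (g : Matrix (Fin m) (Fin m) F) {i : Fin n} (h : (i : ℕ) < m) (k : Fin n) :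
    embM n g i k = extv (g ⟨i, h⟩) k := dif_pos h

lemma embM_ge {n m : ℕ} (g : Matrix (Fin m) (Fin m) F) {i : Fin n} (h : m ≤ (i : ℕ)) (k : Fin n) :
    embM n g i k = (1 : Matrix (Fin n) (Fin n) F) i k := by
  rw [embM, dif_neg (by omega), Matrix.one_apply]

lemma embM_mul {n m : ℕ} (hmn : m ≤ n) (g h : Matrix (Fin m) (Fin m) F) :
    embM n (g * h) = embM n g * embM n h := by
  ext i k
  rw [Matrix.mul_apply]
  by_cases hi : (i : ℕ) < m
  · simp only [embM_lt _ hi, mul_comm (extv _ _)]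
    rw [sum_extv hmn]
    by_cases hk : (k : ℕ) < m
    · rw [extv_lt _ hk, Matrix.mul_apply]
      refine Finset.sum_congr rfl fun l _ => ?_
      rw [embM_lt _ (i := Fin.castLE hmn l) l.2, extv_lt _ hk, mul_comm]
      rfl
    · rw [extv_ge _ (by omega)]
      symm
      apply Finset.sum_eq_zero
      intro l _
      rw [embM_lt _ (i := Fin.castLE hmn l) l.2, extv_ge _ (by omega), zero_mul]
  · simp only [embM_ge _ (not_lt.1 hi)]
    rw [Finset.sum_eq_single i]
    · rw [embM_ge _ (by omega)]; simp
    · intro l _ hl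
      rw [Matrix.one_apply_ne hl.symm, zero_mul]
    · simp

lemma embM_one {n m : ℕ} : embM n (1 : Matrix (Fin m) (Fin m) F) = 1 := by
  ext i k
  by_cases hi : (i : ℕ) < m
  · rw [embM_lt _ hi, Matrix.one_apply]
    by_cases hk : (k : ℕ) < m
    · rw [extv_lt _ hk, Matrix.one_apply]
      simp only [Fin.ext_iff]
    · rw [extv_ge _ (by omega), if_neg]
      intro h; subst h; omega
  · rw [embM_ge _ (by omega)]

/-- The embedding `g ↦ diag(g, 1)`. -/
def emb {n m : ℕ} (hmn : m ≤ n) : GL (Fin m) F →* GL (Fin n) F where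
  toFun g :=
    { val := embM n g.val
      inv := embM n g.inv
      val_inv := by rw [← embM_mul hmn, g.val_inv, embM_one]
      inv_val := by rw [← embM_mul hmn, g.inv_val, embM_one] }
  map_one' := Units.ext embM_one
  map_mul' g h := Units.ext (embM_mul hmn _ _)

lemma emb_val {n m : ℕ} (hmn : m ≤ n) (g : GL (Fin m) F) : (emb hmn g).val = embM n g.val := rfl

lemma emb_rowsUnit {n m : ℕ} (hmn : m ≤ n) (g : GL (Fin m) F) : RowsUnit m (emb hmn g) :=
  fun _ k hi => embM_ge _ hi k

lemma emb_emb {n m j : ℕ} (hmn : m ≤ n) (hj : j ≤ m) (g : GL (Fin j) F) :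
    emb hmn (emb hj g) = emb (hj.trans hmn) g := by
  apply Units.ext
  ext i k
  simp only [emb_val]
  by_cases hi : (i : ℕ) < m
  · rw [embM_lt _ hi]
    by_cases hk : (k : ℕ) < m
    · rw [extv_lt _ hk]
      by_cases hi2 : (i : ℕ) < j
      · rw [embM_lt _ (i := ⟨i, hi⟩) hi2, embM_lt _ hi2]
        rfl
      · rw [embM_ge _ (i := ⟨i, hi⟩) (not_lt.1 hi2), embM_ge _ (not_lt.1 hi2), Matrix.one_apply,
          Matrix.one_apply]
        simp only [Fin.ext_iff]
    · rw [extv_ge _ (by omega)]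
      by_cases hi2 : (i : ℕ) < j
      · rw [embM_lt _ hi2, extv_ge _ (by omega)]
      · rw [embM_ge _ (by omega), Matrix.one_apply_ne]
        intro h; subst h; omega
  · rw [embM_ge _ (by omega), embM_ge _ (by omega)]

lemma blk_emb {n : ℕ} (j : Fin n) (g : GL (Fin (j : ℕ)) F) : blk j (emb j.2.le g) = g.val := by
  ext i k
  rw [blk, Matrix.submatrix_apply, emb_val, embM_lt _ (i := Fin.castLE j.2.le i) i.2,
    extv_lt _ (i := Fin.castLE j.2.le k) k.2]
  rfl

lemma exists_last_row {j : ℕ} (a : Fin j → F) (ha : a ≠ 0) (r : Fin j) :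
    ∃ g : GL (Fin j) F, g.val r = a := by
  obtain ⟨i, hi⟩ := Function.ne_iff.1 ha
  have hd : (Matrix.updateRow (1 : Matrix (Fin j) (Fin j) F) i a).det = a i := by
    rw [← Matrix.cramer_transpose_apply]
    simp
  refine ⟨toGL ((Matrix.updateRow (1 : Matrix (Fin j) (Fin j) F) i a).submatrix
    (Equiv.swap i r) id), ?_⟩
  rw [toGL_val]
  · funext k
    simp
  · rw [Matrix.det_permute, hd]
    apply mul_ne_zero _ hi
    rcases Int.units_eq_one_or (Equiv.Perm.sign (Equiv.swap i r)) with h | h <;> rw [h] <;> simp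

lemma exists_mover {n m : ℕ} (hmn : m ≤ n) (j : Fin n) (hj : (j : ℕ) ≤ m) (a : Fin (j : ℕ) → F)
    (ha : a ≠ 0) : ∃ g : GL (Fin m) F, RowsUnit j (emb hmn g) ∧ a0 j ᵥ* blk j (emb hmn g) = a := by
  obtain ⟨i, hi⟩ := Function.ne_iff.1 ha
  have hj0 : 0 < (j : ℕ) := by have := i.2; omega
  obtain ⟨g, hg⟩ := exists_last_row a ha ⟨(j : ℕ) - 1, by omega⟩
  refine ⟨emb hj g, ?_, ?_⟩
  · rw [emb_emb]; exact emb_rowsUnit _ _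
  · rw [emb_emb, blk_emb]
    funext l
    rw [Matrix.vecMul, dotProduct, Finset.sum_eq_single ⟨(j : ℕ) - 1, by omega⟩]
    · rw [hg]
      have e1 : (j : ℕ) - 1 + 1 = j := by omega
      simp only [a0, e1, if_true, one_mul]
    · intro b _ hb
      have : ¬ ((b : ℕ) + 1 = j) := fun h => hb (Fin.ext (by simp; omega))
      simp [a0, this]
    · simp

/-! ### Cardinalities -/

lemma card_unip (m : ℕ) : (UnipFinset F m).card = ∏ i : Fin m, Fintype.card F ^ (i : ℕ) := by
  have h1 : Fintype.card (∀ k : Fin m, (Fin (k : ℕ) → F)) = ∏ i : Fin m, Fintype.card F ^ (i : ℕ) := by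
    classical
    rw [Fintype.card_pi]
    refine Finset.prod_congr rfl fun i _ => ?_
    simp
  rw [← h1, ← Finset.card_univ]
  let M : (∀ k : Fin m, (Fin (k : ℕ) → F)) → Matrix (Fin m) (Fin m) F :=
    fun y => 1 + Matrix.of (fun i k => extv (y k) i)
  have hMv : ∀ y i k, M y i k = (1 : Matrix (Fin m) (Fin m) F) i k + extv (y k) i := by
    intro y i k; rfl
  have hM : ∀ y, IsUnip F (M y) := by
    intro y
    exact isUnip_one_add fun i k h => extv_ge _ h
  have hdet : ∀ y, (M y).det ≠ 0 := by
    intro y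
    rw [Matrix.det_of_upperTriangular]
    · simp [(hM y).1]
    · intro i k h; exact (hM y).2 i k h
  symm
  refine Finset.card_nbij' (fun y => toGL (M y))
    (fun u k i => u.val (Fin.castLE k.2.le i) k) ?_ ?_ ?_ ?_
  · intro y _
    simp only [Finset.mem_coe, mem_UnipFinset]
    rw [toGL_val (hdet y)]; exact hM y
  · intro u _; simp
  · intro y _
    funext k i
    simp only
    rw [toGL_val (hdet y)]
    have hne : Fin.castLE k.2.le i ≠ k := by
      intro h; have := congrArg Fin.val h; have h2 := i.2; simp at this; omega
    rw [hMv, Matrix.one_apply_ne hne, zero_add]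
    rw [extv_lt (y k) (i := Fin.castLE k.2.le i) i.2]; rfl
  · intro u hu
    have hu' := mem_UnipFinset.1 hu
    apply Units.ext
    rw [toGL_val (hdet _)]
    ext i k
    rw [hMv]
    rcases lt_trichotomy i k with h | h | h
    · rw [Matrix.one_apply_ne h.ne, zero_add, extv_lt _ h]; rfl
    · subst h; rw [extv_ge _ le_rfl, hu'.1]; simp
    · rw [Matrix.one_apply_ne h.ne', zero_add, extv_ge _ (le_of_lt h), hu'.2 _ _ h]

lemma card_GL_eq (m : ℕ) : (Fintype.card (GL (Fin m) F) : ℂ) =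
    ((UnipFinset F m).card : ℂ) * ∏ i ∈ Finset.Ico 1 (m + 1), ((Fintype.card F : ℂ) ^ i - 1) := by
  have h := Matrix.card_GL_field (𝔽 := F) m
  rw [Nat.card_eq_fintype_card] at h
  have h' : Fintype.card (GL (Fin m) F) =
      ∏ i : Fin m, (Fintype.card F ^ m - Fintype.card F ^ (i : ℕ)) := by
    rw [← h]
  rw [h', card_unip]
  push_cast
  have e2 : ∏ i ∈ Finset.Ico 1 (m + 1), ((Fintype.card F : ℂ) ^ i - 1) =
      ∏ i : Fin m, ((Fintype.card F : ℂ) ^ (m - (i : ℕ)) - 1) := by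
    rw [Finset.prod_Ico_eq_prod_range, Fin.prod_univ_eq_prod_range
      (fun i => (Fintype.card F : ℂ) ^ (m - i) - 1), ← Finset.prod_range_reflect]
    refine Finset.prod_congr (by simp) fun i hi => ?_
    rw [Finset.mem_range] at hi
    congr 2
    omega
  rw [e2, ← Finset.prod_mul_distrib]
  refine Finset.prod_congr rfl fun i _ => ?_
  have := i.2
  rw [Nat.cast_sub (Nat.pow_le_pow_right Fintype.card_pos i.2.le)]
  push_cast
  rw [mul_sub, mul_one, ← pow_add]
  congr 2
  omega

/-! ### Expansion of functionals along `GL_m` -/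
section kir
variable {n : ℕ} {V : Type*} [AddCommGroup V] [Module ℂ V]
    {π : Representation ℂ (GL (Fin n) F) V} {ψ : AddChar F ℂˣ}

lemma pi_inv_mul (g : GL (Fin n) F) : π g⁻¹ * π g = 1 := by
  rw [← map_mul, inv_mul_cancel, map_one]

lemma pi_mul_inv (g : GL (Fin n) F) : π g * π g⁻¹ = 1 := by
  rw [← map_mul, mul_inv_cancel, map_one]

lemma eJ_conj {j : Fin n} {g : GL (Fin n) F} (hg : RowsUnit j g) {a : Fin (j : ℕ) → F}
    (ha : a0 j ᵥ* blk j g = a) : eJ π ψ j a = π g⁻¹ * eJ π ψ j (a0 j) * π g := by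
  rw [mul_assoc, eJ_mul_of_rowsUnit π ψ hg, ha, ← mul_assoc, pi_inv_mul, one_mul]

lemma comm_inv {T : Module.End ℂ V} {g : GL (Fin n) F} (h : T * π g = π g * T) :
    T * π g⁻¹ = π g⁻¹ * T := by
  calc T * π g⁻¹ = π g⁻¹ * (π g * T) * π g⁻¹ := by rw [← mul_assoc, pi_inv_mul, one_mul]
    _ = π g⁻¹ * T := by rw [← h, mul_assoc, mul_assoc, pi_mul_inv, mul_one]

lemma kirillov_aux (hψ : ∃ a : F, ψ a ≠ 1) (hcusp : IsCuspidal π) {v0 : V}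
    (hv : ∀ u : GL (Fin n) F, IsUnip F u.val → π u v0 = psiN ψ u • v0) {m : ℕ} (hmn : m < n)
    {l : V →ₗ[ℂ] ℂ} (hl : l ∈ Wh π ψ (m + 1)) (d : ℕ) (hd : d ≤ m) :
    ∃ T : Module.End ℂ V,
      (∀ g : GL (Fin m) F, (l ∘ₗ π (emb hmn.le g)⁻¹) ∘ₗ T ∈ Wh π ψ (m + 1 - d)) ∧
      (∀ g : GL (Fin n) F, RowsUnit (m - d) g → T * π g = π g * T) ∧ T v0 = v0 ∧
      ∀ v, (Fintype.card (GL (Fin m) F) : ℂ) * l v =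
        (∏ i ∈ Finset.Ico (m + 1 - d) (m + 1), ((Fintype.card F : ℂ) ^ i - 1)) *
          ∑ g : GL (Fin m) F, l (π (emb hmn.le g)⁻¹ (T (π (emb hmn.le g) v))) := by
  induction d with
  | zero =>
    refine ⟨1, ?_, ?_, rfl, ?_⟩
    · intro g
      rw [← map_inv]
      exact Wh_comp hl (emb_rowsUnit _ _)
    · intro g _; simp
    · intro v
      rw [Finset.sum_congr rfl (g := fun _ => l v)]
      · simp
      · intro g _
        rw [Module.End.one_apply, ← Module.End.mul_apply, pi_inv_mul, Module.End.one_apply]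
  | succ d ih =>
    obtain ⟨T, hT1, hT2, hT3, hT4⟩ := ih (by omega)
    have hjn : m - d < n := by omega
    set j : Fin n := ⟨m - d, hjn⟩ with hj
    have hj1 : m + 1 - d = (j : ℕ) + 1 := by simp [hj]; omega
    have hj2 : m + 1 - (d + 1) = (j : ℕ) := by simp [hj]
    have hj3 : m - (d + 1) = (j : ℕ) - 1 := by simp [hj]; omega
    have hj4 : m - d = (j : ℕ) := rfl
    have hj5 : 1 ≤ (j : ℕ) := by simp only [hj]; omega
    rw [hj1] at hT1 hT4
    rw [hj4] at hT2
    rw [hj2, hj3]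
    refine ⟨T * eJ π ψ j (a0 j), ?_, ?_, ?_, ?_⟩
    · intro g
      exact Wh_eJ0 (hT1 g)
    · intro g hg
      rw [mul_assoc, eJ_comm π ψ hg, ← mul_assoc, hT2 g (hg.mono (by omega)), mul_assoc]
    · rw [Module.End.mul_apply, eJ_fix π ψ j hv, hT3]
    · intro v
      rw [hT4 v, Finset.prod_eq_prod_Ico_succ_bot (a := (j : ℕ)) (by simp only [hj]; omega),
        mul_comm ((Fintype.card F : ℂ) ^ (j : ℕ) - 1), mul_assoc]
      congr 1
      set f : GL (Fin m) F → ℂ := fun g =>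
        l (π (emb hmn.le g)⁻¹ ((T * eJ π ψ j (a0 j)) (π (emb hmn.le g) v))) with hf
      have step : ∀ a : Fin (j : ℕ) → F, ∑ g : GL (Fin m) F,
          l (π (emb hmn.le g)⁻¹ (T (eJ π ψ j a (π (emb hmn.le g) v)))) =
          if a = 0 then 0 else ∑ g, f g := by
        intro a
        split_ifs with ha
        · subst ha
          apply Finset.sum_eq_zero
          intro g _
          exact cusp_kill hcusp hj5 (hT1 g) _
        · obtain ⟨h, hh1, hh2⟩ := exists_mover hmn.le j (by simp [hj]) a ha
          rw [← Equiv.sum_comp (Equiv.mulLeft h) f]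
          refine Finset.sum_congr rfl fun g _ => ?_
          rw [Equiv.coe_mulLeft, hf]
          simp only
          congr 1
          rw [eJ_conj hh1 hh2, map_mul, _root_.mul_inv_rev, map_mul, map_mul]
          simp only [← Module.End.mul_apply]
          congr 1
          have := comm_inv (hT2 _ hh1)
          simp only [← mul_assoc]
          rw [mul_assoc (π (emb hmn.le g)⁻¹) T, this, ← mul_assoc]
      have h1 : ∀ g : GL (Fin m) F, l (π (emb hmn.le g)⁻¹ (T (π (emb hmn.le g) v))) =
          ∑ a, l (π (emb hmn.le g)⁻¹ (T (eJ π ψ j a (π (emb hmn.le g) v)))) := by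
        intro g
        simp only [← map_sum]
        rw [← LinearMap.sum_apply, sum_eJ π ψ hψ, Module.End.one_apply]
      rw [Finset.sum_congr rfl fun g _ => h1 g, Finset.sum_comm,
        Finset.sum_congr rfl fun a _ => step a, ← Finset.add_sum_erase _ _ (Finset.mem_univ 0),
        if_pos rfl, zero_add, Finset.sum_congr rfl (g := fun _ => ∑ g, f g)]
      · rw [Finset.sum_const, nsmul_eq_mul, Finset.card_erase_of_mem (Finset.mem_univ _),
          Finset.card_univ, Nat.cast_sub Fintype.card_pos]
        congr 1
        simp
      · intro a ha
        rw [if_neg (Finset.ne_of_mem_erase ha)]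

theorem kirillov (hψ : ∃ a : F, ψ a ≠ 1) (hcusp : IsCuspidal π) {lam : V →ₗ[ℂ] ℂ} {v0 : V}
    (he : ∀ v, eOp π (psiN ψ) v = lam v • v0) (h1 : lam v0 = 1) {m : ℕ} (hmn : m < n)
    {l : V →ₗ[ℂ] ℂ} (hl : l ∈ Wh π ψ (m + 1)) (v : V) :
    l v = ((UnipFinset F m).card : ℂ)⁻¹ * ∑ g : GL (Fin m) F,
      l (π (emb hmn.le g)⁻¹ v0) * lam (π (emb hmn.le g) v) := by
  obtain ⟨T, hT1, hT2, hT3, hT4⟩ := kirillov_aux hψ hcusp (fun u hu => mo_vec he h1 hu) hmn hl m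
    le_rfl
  have h2 := hT4 v
  have e : m + 1 - m = 1 := by omega
  rw [e] at h2 hT1
  rw [card_GL_eq] at h2
  have hc : ∏ i ∈ Finset.Ico 1 (m + 1), ((Fintype.card F : ℂ) ^ i - 1) ≠ 0 := by
    rw [Finset.prod_ne_zero_iff]
    intro i hi h3
    have hq : 1 < Fintype.card F := Fintype.one_lt_card
    have : 1 < Fintype.card F ^ i := Nat.one_lt_pow (by simp at hi; omega) hq
    have h4 : ((Fintype.card F ^ i : ℕ) : ℂ) = (1 : ℕ) := by
      push_cast; exact sub_eq_zero.1 h3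
    have := Nat.cast_injective h4
    omega
  have h3 : ∀ g : GL (Fin m) F, l (π (emb hmn.le g)⁻¹ (T (π (emb hmn.le g) v))) =
      l (π (emb hmn.le g)⁻¹ v0) * lam (π (emb hmn.le g) v) := by
    intro g
    have := mo_unique he (Wh_whittaker (hT1 g)) (π (emb hmn.le g) v)
    simp only [LinearMap.comp_apply] at this
    rw [this, hT3]
  rw [Finset.sum_congr rfl fun g _ => h3 g, mul_comm ((UnipFinset F m).card : ℂ), mul_assoc] at h2
  have h4 := mul_left_cancel₀ hc h2
  rw [← h4, ← mul_assoc, inv_mul_cancel₀ (card_Unip_ne_zero m), one_mul]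

end kir

/-! ### Lower triangular averaging -/

/-- The nilpotent matrix with block `x` in rows `m, …, m + a - 1` and columns `< m`. -/
def nxM (n : ℕ) {a m : ℕ} (x : Matrix (Fin a) (Fin m) F) : Matrix (Fin n) (Fin n) F :=
  fun i c => if h : m ≤ (i : ℕ) ∧ (i : ℕ) < m + a ∧ (c : ℕ) < m then
    x ⟨(i : ℕ) - m, by omega⟩ ⟨c, h.2.2⟩ else 0

lemma nxM_sq {n a m : ℕ} (x y : Matrix (Fin a) (Fin m) F) : nxM n x * nxM n y = 0 := by
  ext i c
  rw [Matrix.mul_apply]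
  apply Finset.sum_eq_zero
  intro l _
  by_cases h : (l : ℕ) < m
  · rw [nxM, nxM, dif_neg (c := m ≤ (l : ℕ) ∧ _) (by omega), mul_zero]
  · rw [nxM, dif_neg (by omega), zero_mul]

lemma nxM_add {n a m : ℕ} (x y : Matrix (Fin a) (Fin m) F) :
    nxM n (x + y) = nxM n x + nxM n y := by
  ext i c
  rw [Matrix.add_apply]
  unfold nxM
  split_ifs <;> simp

/-- The group element `1 + nxM x`. -/
noncomputable def nx (n : ℕ) {a m : ℕ} (x : Matrix (Fin a) (Fin m) F) : GL (Fin n) F :=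
  nu (nxM n x)

lemma nx_val {n a m : ℕ} (x : Matrix (Fin a) (Fin m) F) : (nx n x).val = 1 + nxM n x :=
  nu_val (nxM_sq x x)

lemma nx_add {n a m : ℕ} (x y : Matrix (Fin a) (Fin m) F) : nx n (x + y) = nx n x * nx n y := by
  unfold nx
  rw [nxM_add, nu_add (nxM_sq _ _) (nxM_sq _ _) (nxM_sq _ _) (nxM_sq _ _)]

lemma card_mat (a m : ℕ) : Fintype.card (Matrix (Fin a) (Fin m) F) = Fintype.card F ^ (m * a) := by
  rw [← Fintype.card_congr (Matrix.of : (Fin a → Fin m → F) ≃ Matrix (Fin a) (Fin m) F)]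
  simp [pow_mul]

section low
variable {n : ℕ} {V : Type*} [AddCommGroup V] [Module ℂ V]
    {π : Representation ℂ (GL (Fin n) F) V} {ψ : AddChar F ℂˣ}

/-- The linear form on column `j` which is `z` on the first `m` coordinates and generic below. -/
def bz {m : ℕ} (j : Fin n) (z : Fin m → F) : Fin (j : ℕ) → F :=
  fun i => if h : (i : ℕ) < m then z ⟨i, h⟩ else a0 j i

lemma nx_mover {m a : ℕ} (j : Fin n) (h1 : m + 1 ≤ (j : ℕ)) (h2 : (j : ℕ) ≤ m + a) (z : Fin m → F) :
    ∃ x : Matrix (Fin a) (Fin m) F, RowsUnit j (nx n x) ∧ a0 j ᵥ* blk j (nx n x) = bz j z := by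
  refine ⟨Matrix.of fun i c => if (i : ℕ) + m + 1 = j then z c else 0, ?_, ?_⟩
  · intro i c hi
    rw [nx_val, Matrix.add_apply]
    have : nxM n (Matrix.of fun (i : Fin a) c => if (i : ℕ) + m + 1 = j then z c else 0) i c = 0 := by
      unfold nxM
      split_ifs with h3
      · rw [Matrix.of_apply, if_neg (by simp only; omega)]
      · rfl
    rw [this, add_zero]
  · funext l
    have hl := l.2
    rw [Matrix.vecMul, dotProduct, Finset.sum_eq_single ⟨(j : ℕ) - 1, by omega⟩]
    · have e1 : (j : ℕ) - 1 + 1 = j := by omega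
      rw [blk, Matrix.submatrix_apply, nx_val, Matrix.add_apply]
      simp only [a0, e1, if_true, one_mul, bz]
      by_cases hlm : (l : ℕ) < m
      · rw [dif_pos hlm, Matrix.one_apply_ne, zero_add, nxM, dif_pos]
        · rw [Matrix.of_apply, if_pos]
          · rfl
          · simp; omega
        · simp; omega
        · intro h
          have := congrArg Fin.val h
          simp at this; omega
      · rw [dif_neg hlm, nxM, dif_neg, add_zero, Matrix.one_apply]
        · simp only [Fin.ext_iff, Fin.val_castLE]
          have e2 : ((j : ℕ) - 1 = l) ↔ ((l : ℕ) + 1 = j) := by omega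
          simp only [e2]
        · simp; omega
    · intro b _ hb
      have : ¬ ((b : ℕ) + 1 = j) := fun h => hb (Fin.ext (by simp; omega))
      simp [a0, this]
    · simp

lemma low_aux (hψ : ∃ a : F, ψ a ≠ 1) {v0 : V}
    (hv : ∀ u : GL (Fin n) F, IsUnip F u.val → π u v0 = psiN ψ u • v0) {m a : ℕ}
    (hmn : m + a < n) {l : V →ₗ[ℂ] ℂ} (R1 : l ∈ Wh π ψ (m + a + 1))
    (R2 : ∀ r : Fin n, m + 1 ≤ (r : ℕ) → (r : ℕ) ≤ m + a → ∀ y : Fin (r : ℕ) → F,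
      (∀ i : Fin (r : ℕ), (i : ℕ) < m → y i = 0) → ∀ v,
        l (π (cg r y) v) = ps ψ (a0 r ⬝ᵥ y) * l v)
    (R3 : ∀ (x : Matrix (Fin a) (Fin m) F) v, l (π (nx n x) v) = l v) (d : ℕ) (hd : d ≤ a) :
    ∃ T : Module.End ℂ V, l ∘ₗ T ∈ Wh π ψ (m + a + 1 - d) ∧
      (∀ g : GL (Fin n) F, RowsUnit (m + a - d) g → T * π g = π g * T) ∧ T v0 = v0 ∧
      ∀ v, (Fintype.card F : ℂ) ^ (m * a) * l v = (Fintype.card F : ℂ) ^ (m * d) *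
        ∑ x : Matrix (Fin a) (Fin m) F, l (T (π (nx n x) v)) := by
  induction d with
  | zero =>
    refine ⟨1, R1, fun g _ => by simp, rfl, fun v => ?_⟩
    rw [Finset.sum_congr rfl (g := fun _ => l v)]
    · rw [Finset.sum_const, nsmul_eq_mul, mul_zero, pow_zero, one_mul]
      congr 1
      rw [Finset.card_univ, card_mat]
      push_cast
      rfl
    · intro x _
      rw [Module.End.one_apply, R3]
  | succ d ih =>
    obtain ⟨T, hT1, hT2, hT3, hT4⟩ := ih (by omega)
    set j : Fin n := ⟨m + a - d, by omega⟩ with hj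
    have hj1 : m + a + 1 - d = (j : ℕ) + 1 := by simp only [hj]; omega
    have hj2 : m + a + 1 - (d + 1) = (j : ℕ) := by simp only [hj]; omega
    have hj3 : m + a - (d + 1) = (j : ℕ) - 1 := by simp only [hj]; omega
    have hj4 : m + a - d = (j : ℕ) := rfl
    have hj5 : m + 1 ≤ (j : ℕ) := by simp only [hj]; omega
    have hj6 : (j : ℕ) ≤ m + a := by simp only [hj]; omega
    rw [hj1] at hT1
    rw [hj4] at hT2
    rw [hj2, hj3]
    refine ⟨T * eJ π ψ j (a0 j), Wh_eJ0 hT1, ?_, ?_, ?_⟩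
    · intro g hg
      rw [mul_assoc, eJ_comm π ψ hg, ← mul_assoc, hT2 g (hg.mono (by omega)), mul_assoc]
    · rw [Module.End.mul_apply, eJ_fix π ψ j hv, hT3]
    · intro v
      rw [hT4 v, mul_add, mul_one, pow_add, mul_assoc]
      congr 1
      set f : Matrix (Fin a) (Fin m) F → ℂ := fun x =>
        l ((T * eJ π ψ j (a0 j)) (π (nx n x) v)) with hf
      have stepz : ∀ z : Fin m → F, ∑ x : Matrix (Fin a) (Fin m) F,
          l (T (eJ π ψ j (bz j z) (π (nx n x) v))) = ∑ x, f x := by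
        intro z
        obtain ⟨x', hx1, hx2⟩ := nx_mover j hj5 hj6 z
        rw [← Equiv.sum_comp (Equiv.addLeft x') f]
        refine Finset.sum_congr rfl fun x _ => ?_
        rw [Equiv.coe_addLeft, hf]
        simp only
        rw [eJ_conj hx1 hx2, nx_add, map_mul]
        have hinv : ∀ w, l (π (nx n x')⁻¹ w) = l w := by
          intro w
          rw [← R3 x' (π (nx n x')⁻¹ w), ← Module.End.mul_apply, pi_mul_inv, Module.End.one_apply]
        have := comm_inv (hT2 _ hx1)
        refine Eq.trans ?_ (hinv _)
        congr 1
        simp only [← Module.End.mul_apply]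
        congr 1
        simp only [← mul_assoc]
        rw [this]
      have stepb : ∀ b : Fin (j : ℕ) → F, b ∉ Set.range (bz j : (Fin m → F) → _) → ∀ w,
          l (T (eJ π ψ j b w)) = 0 := by
        intro b hb w
        by_contra h0
        apply hb
        refine ⟨fun i => b ⟨i, by omega⟩, ?_⟩
        funext i
        unfold bz
        split_ifs with hi
        · rfl
        · apply ps_inj hψ
          intro t
          have e1 : a0 j ⬝ᵥ (Pi.single i t) = t * a0 j i := by simp [mul_comm]
          have e2 : b ⬝ᵥ (Pi.single i t) = t * b i := by simp [mul_comm]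
          rw [← e1, ← e2]
          have h3 := cg_mul_eJ π ψ j b (Pi.single i t)
          have h4 := R2 j hj5 hj6 (Pi.single i t) (by
            intro i' hi'
            rw [Pi.single_eq_of_ne]
            intro h; subst h; exact hi hi') (T (eJ π ψ j b w))
          have h5 := hT2 _ (cg_rowsUnit j (Pi.single i t))
          rw [← Module.End.mul_apply (π _) T, ← h5, Module.End.mul_apply,
            ← Module.End.mul_apply (π _) (eJ π ψ j b), h3, LinearMap.smul_apply, map_smul,
            map_smul, smul_eq_mul] at h4
          exact (mul_right_cancel₀ h0 h4).symm
      have hbz : Function.Injective (bz j : (Fin m → F) → _) := by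
        intro z z' h
        funext i
        have := congrFun h ⟨i, by omega⟩
        simpa [bz] using this
      have h1 : ∀ x : Matrix (Fin a) (Fin m) F, l (T (π (nx n x) v)) =
          ∑ z : Fin m → F, l (T (eJ π ψ j (bz j z) (π (nx n x) v))) := by
        intro x
        rw [Fintype.sum_of_injective (bz j : (Fin m → F) → _) hbz _
          (fun b => l (T (eJ π ψ j b (π (nx n x) v)))) (fun b hb => stepb b hb _) (fun _ => rfl)]
        simp only [← map_sum]
        rw [← LinearMap.sum_apply, sum_eJ π ψ hψ, Module.End.one_apply]
      rw [Finset.sum_congr rfl fun x _ => h1 x, Finset.sum_comm,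
        Finset.sum_congr rfl fun z _ => stepz z, Finset.sum_const, nsmul_eq_mul, Finset.card_univ]
      congr 1
      simp

theorem low_expand (hψ : ∃ a : F, ψ a ≠ 1) (hcusp : IsCuspidal π) {lam : V →ₗ[ℂ] ℂ} {v0 : V}
    (he : ∀ v, eOp π (psiN ψ) v = lam v • v0) (h1 : lam v0 = 1) {m a : ℕ}
    (hmn : m + a < n) (hmn' : m < n) {l : V →ₗ[ℂ] ℂ} (R1 : l ∈ Wh π ψ (m + a + 1))
    (R2 : ∀ r : Fin n, m + 1 ≤ (r : ℕ) → (r : ℕ) ≤ m + a → ∀ y : Fin (r : ℕ) → F,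
      (∀ i : Fin (r : ℕ), (i : ℕ) < m → y i = 0) → ∀ v,
        l (π (cg r y) v) = ps ψ (a0 r ⬝ᵥ y) * l v)
    (R3 : ∀ (x : Matrix (Fin a) (Fin m) F) v, l (π (nx n x) v) = l v) (v : V) :
    l v = ((UnipFinset F m).card : ℂ)⁻¹ * ∑ g : GL (Fin m) F, ∑ x : Matrix (Fin a) (Fin m) F,
      l (π (emb hmn'.le g)⁻¹ v0) * lam (π (emb hmn'.le g * nx n x) v) := by
  obtain ⟨T, hT1, hT2, hT3, hT4⟩ := low_aux hψ (fun u hu => mo_vec he h1 hu) hmn R1 R2 R3 a le_rfl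
  have e1 : m + a + 1 - a = m + 1 := by omega
  have e2 : m + a - a = m := by omega
  rw [e1] at hT1
  rw [e2] at hT2
  have h2 := mul_left_cancel₀ (pow_ne_zero _ card_F_ne_zero) (hT4 v)
  rw [h2]
  have h3 : ∀ g : GL (Fin m) F, l (T (π (emb hmn'.le g)⁻¹ v0)) = l (π (emb hmn'.le g)⁻¹ v0) := by
    intro g
    rw [← Module.End.mul_apply, comm_inv (hT2 _ (emb_rowsUnit hmn'.le g)), Module.End.mul_apply, hT3]
  have h4 : ∀ x : Matrix (Fin a) (Fin m) F, l (T (π (nx n x) v)) =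
      ((UnipFinset F m).card : ℂ)⁻¹ * ∑ g : GL (Fin m) F,
      l (π (emb hmn'.le g)⁻¹ v0) * lam (π (emb hmn'.le g * nx n x) v) := by
    intro x
    have := kirillov hψ hcusp he h1 hmn' hT1 (π (nx n x) v)
    simp only [LinearMap.comp_apply] at this
    rw [this]
    congr 1
    refine Finset.sum_congr rfl fun g _ => ?_
    rw [h3, map_mul, Module.End.mul_apply]
  rw [Finset.sum_congr rfl fun x _ => h4 x, ← Finset.mul_sum, Finset.sum_comm]

end low

/-! ### The long element and the dual side -/

/-- The rotation `i ↦ i + m` of `Fin n`. -/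
def sE {n m : ℕ} (hmn : m < n) : Equiv.Perm (Fin n) where
  toFun i := ⟨if (i : ℕ) < n - m then i + m else i - (n - m), by split_ifs <;> omega⟩
  invFun i := ⟨if (i : ℕ) < m then i + (n - m) else i - m, by split_ifs <;> omega⟩
  left_inv i := by
    have := i.2
    ext
    simp only
    split_ifs <;> omega
  right_inv i := by
    have := i.2
    ext
    simp only
    split_ifs <;> omega

lemma sE_val {n m : ℕ} (hmn : m < n) (i : Fin n) :
    (sE hmn i : ℕ) = if (i : ℕ) < n - m then (i : ℕ) + m else i - (n - m) := rfl

/-- The block permutation matrix. -/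
noncomputable def wg {n m : ℕ} (hmn : m < n) : GL (Fin n) F :=
  toGL ((1 : Matrix (Fin n) (Fin n) F).submatrix (sE hmn) id)

lemma wg_val {n m : ℕ} (hmn : m < n) :
    (wg hmn : GL (Fin n) F).val = (1 : Matrix (Fin n) (Fin n) F).submatrix (sE hmn) id := by
  unfold wg
  apply toGL_val
  rw [Matrix.det_permute]
  rcases Int.units_eq_one_or (Equiv.Perm.sign (sE hmn)) with h | h <;> rw [h] <;> simp

lemma wg_mul_apply {n m : ℕ} (hmn : m < n) (M : Matrix (Fin n) (Fin n) F) (i j : Fin n) :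
    ((wg hmn : GL (Fin n) F).val * M) i j = M (sE hmn i) j := by
  rw [wg_val, Matrix.mul_apply]
  simp [Matrix.one_apply]

lemma mul_wg_apply {n m : ℕ} (hmn : m < n) (M : Matrix (Fin n) (Fin n) F) (i j : Fin n) :
    (M * (wg hmn : GL (Fin n) F).val) i (sE hmn j) = M i j := by
  rw [wg_val, Matrix.mul_apply]
  simp [Matrix.one_apply]

lemma wg_conj {n m : ℕ} (hmn : m < n) (h : GL (Fin n) F) :
    (wg hmn * h * (wg hmn)⁻¹ : GL (Fin n) F).val = h.val.submatrix (sE hmn) (sE hmn) := by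
  ext i j
  have := mul_wg_apply hmn (wg hmn * h * (wg hmn)⁻¹ : GL (Fin n) F).val i j
  rw [← this, ← Units.val_mul, inv_mul_cancel_right, Units.val_mul, wg_mul_apply]
  rfl

lemma wg_unip {n m : ℕ} (hmn : m < n) {X : Matrix (Fin n) (Fin n) F}
    (h0 : ∀ i j : Fin n, (i : ℕ) < m → X i j = 0)
    (hu : ∀ i j : Fin n, m ≤ (j : ℕ) → (j : ℕ) ≤ i → X i j = 0)
    (hl : ∀ i j : Fin n, (j : ℕ) < m → (i : ℕ) + 1 = n → X i j = 0) :
    IsUnip F ((1 + X).submatrix (sE hmn) (sE hmn)) ∧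
      superdiag F ((1 + X).submatrix (sE hmn) (sE hmn)) = superdiag F X := by
  have e : (1 + X).submatrix (sE hmn) (sE hmn) = 1 + X.submatrix (sE hmn) (sE hmn) := by
    ext i j
    simp [Matrix.one_apply]
  rw [e, superdiag_one_add]
  constructor
  · apply isUnip_one_add
    intro i j hij
    rw [Matrix.submatrix_apply]
    have h1 := sE_val hmn i
    have h2 := sE_val hmn j
    have hi := i.2
    have hj := j.2
    split_ifs at h1 h2
    · exact hu _ _ (by omega) (by omega)
    · exact h0 _ _ (by omega)
    · exact h0 _ _ (by omega)
    · exact h0 _ _ (by omega)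
  · unfold superdiag
    rw [← Equiv.sum_comp (sE hmn) (fun i => ∑ j : Fin n, if (j : ℕ) = (i : ℕ) + 1 then X i j else 0)]
    refine Finset.sum_congr rfl fun i _ => ?_
    rw [← Equiv.sum_comp (sE hmn)
      (fun j => if (j : ℕ) = (sE hmn i : ℕ) + 1 then X (sE hmn i) j else 0)]
    refine Finset.sum_congr rfl fun j _ => ?_
    rw [Matrix.submatrix_apply]
    have h1 := sE_val hmn i
    have h2 := sE_val hmn j
    have hi := i.2
    have hj := j.2
    by_cases c1 : (i : ℕ) < n - m
    · rw [if_pos c1] at h1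
      by_cases c2 : (j : ℕ) < n - m
      · rw [if_pos c2] at h2
        have : ((j : ℕ) = i + 1) ↔ ((sE hmn j : ℕ) = (sE hmn i : ℕ) + 1) := by omega
        simp only [this]
      · rw [if_neg c2] at h2
        rw [if_neg (c := (sE hmn j : ℕ) = (sE hmn i : ℕ) + 1) (by omega)]
        split_ifs with h3
        · exact hl _ _ (by omega) (by omega)
        · rfl
    · rw [if_neg c1] at h1
      rw [h0 _ _ (by omega)]
      simp

lemma embM_mul_of {n m : ℕ} (g : Matrix (Fin m) (Fin m) F) {X : Matrix (Fin n) (Fin n) F}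
    (h : ∀ i j : Fin n, (i : ℕ) < m → X i j = 0) : embM n g * X = X := by
  ext i c
  rw [Matrix.mul_apply]
  by_cases hi : (i : ℕ) < m
  · rw [h i c hi]
    apply Finset.sum_eq_zero
    intro l _
    by_cases hl : (l : ℕ) < m
    · rw [h l c hl, mul_zero]
    · rw [embM_lt _ hi, extv_ge _ (by omega), zero_mul]
  · rw [Finset.sum_eq_single i]
    · rw [embM_ge _ (by omega)]; simp
    · intro l _ hl
      rw [embM_ge _ (by omega), Matrix.one_apply_ne hl.symm, zero_mul]
    · simp

lemma mul_embM_of {n m : ℕ} (g : Matrix (Fin m) (Fin m) F) {X : Matrix (Fin n) (Fin n) F}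
    (h : ∀ i j : Fin n, (j : ℕ) < m → X i j = 0) : X * embM n g = X := by
  ext i c
  rw [Matrix.mul_apply, Finset.sum_eq_single c]
  · by_cases hc : (c : ℕ) < m
    · rw [h i c hc, zero_mul]
    · rw [embM_ge _ (by omega)]; simp
  · intro l _ hl
    by_cases hc : (l : ℕ) < m
    · rw [h i l hc, zero_mul]
    · rw [embM_ge _ (by omega), Matrix.one_apply_ne hl, mul_zero]
  · simp

/-- Support in rows `< m` and columns `≥ n - k`. -/
def Ysup (m k : ℕ) {n : ℕ} (X : Matrix (Fin n) (Fin n) F) : Prop :=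
  (∀ i c : Fin n, m ≤ (i : ℕ) → X i c = 0) ∧ ∀ i c : Fin n, (c : ℕ) < n - k → X i c = 0

/-- The nilpotent matrix with block `y` in rows `< m` and columns `≥ n - k`. -/
def yM (n : ℕ) {m k : ℕ} (y : Matrix (Fin m) (Fin k) F) : Matrix (Fin n) (Fin n) F :=
  fun i c => if h : (i : ℕ) < m ∧ n - k ≤ (c : ℕ) then
    y ⟨i, h.1⟩ ⟨(c : ℕ) - (n - k), by omega⟩ else 0

lemma yM_sup {n m k : ℕ} (y : Matrix (Fin m) (Fin k) F) : Ysup m k (yM n y) := by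
  constructor
  · intro i c h; rw [yM, dif_neg (by omega)]
  · intro i c h; rw [yM, dif_neg (by omega)]

lemma yM_surj {n m k : ℕ} (hmn : m ≤ n) (hk : k ≤ n) {X : Matrix (Fin n) (Fin n) F}
    (hX : Ysup m k X) : ∃ y : Matrix (Fin m) (Fin k) F, yM n y = X := by
  refine ⟨Matrix.of fun i c => X (Fin.castLE hmn i) ⟨n - k + c, by omega⟩, ?_⟩
  ext i c
  unfold yM
  split_ifs with h
  · rw [Matrix.of_apply]
    congr 1
    ext
    simp only
    omega
  · by_cases h1 : (i : ℕ) < m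
    · rw [hX.2 i c (by omega)]
    · rw [hX.1 i c (by omega)]

lemma yM_inj {n m k : ℕ} (hmn : m ≤ n) (hk : k ≤ n) {y y' : Matrix (Fin m) (Fin k) F}
    (h : yM n y = yM n y') : y = y' := by
  ext i c
  have := congrFun (congrFun h (Fin.castLE hmn i)) ⟨n - k + c, by omega⟩
  unfold yM at this
  rw [dif_pos ⟨i.2, by simp⟩, dif_pos ⟨i.2, by simp⟩] at this
  have e : (⟨n - k + (c : ℕ) - (n - k), by omega⟩ : Fin k) = c := by ext; simp
  simp only [e] at this
  exact this

lemma yM_add {n m k : ℕ} (y y' : Matrix (Fin m) (Fin k) F) :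
    yM n (y + y') = yM n y + yM n y' := by
  ext i c
  rw [Matrix.add_apply]
  unfold yM
  split_ifs <;> simp

lemma Ysup_sq {n m k : ℕ} (hk : m + k < n) {X Y : Matrix (Fin n) (Fin n) F}
    (hX : Ysup m k X) (hY : Ysup m k Y) : X * Y = 0 :=
  supp_sq (j := m) (fun i c h => hX.2 i c (by omega)) hY.1

/-- The group element `1 + yM y`. -/
noncomputable def yg (n : ℕ) {m k : ℕ} (y : Matrix (Fin m) (Fin k) F) : GL (Fin n) F :=
  nu (yM n y)

section yg
variable {n m k : ℕ} (hk : m + k < n)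

lemma yg_val (hk : m + k < n) (y : Matrix (Fin m) (Fin k) F) : (yg n y).val = 1 + yM n y :=
  nu_val (Ysup_sq hk (yM_sup y) (yM_sup y))

lemma yg_add (hk : m + k < n) (y y' : Matrix (Fin m) (Fin k) F) :
    yg n (y + y') = yg n y * yg n y' := by
  unfold yg
  rw [yM_add]
  exact nu_add (Ysup_sq hk (yM_sup _) (yM_sup _)) (Ysup_sq hk (yM_sup _) (yM_sup _))
    (Ysup_sq hk (yM_sup _) (yM_sup _)) (Ysup_sq hk (yM_sup _) (yM_sup _))

lemma yg_inj (hk : m + k < n) {y y' : Matrix (Fin m) (Fin k) F} (h : yg n y = yg n y') :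
    y = y' := by
  have h0 : (yg n y).val = (yg n y').val := by rw [h]
  rw [yg_val hk, yg_val hk] at h0
  exact yM_inj (by omega) (by omega) (add_left_cancel h0)

lemma yg_surj (hk : m + k < n) {X : Matrix (Fin n) (Fin n) F} (hX : Ysup m k X) :
    ∃ y : Matrix (Fin m) (Fin k) F, (yg n y).val = 1 + X := by
  obtain ⟨y, hy⟩ := yM_surj (by omega) (by omega) hX
  exact ⟨y, by rw [yg_val hk, hy]⟩

lemma yg_unip (hk : m + k < n) (y : Matrix (Fin m) (Fin k) F) : IsUnip F (yg n y).val := by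
  rw [yg_val hk]
  apply isUnip_one_add
  intro i c h
  by_cases h1 : (i : ℕ) < m
  · exact (yM_sup y).2 i c (by omega)
  · exact (yM_sup y).1 i c (by omega)

lemma yg_psiN (hk : m + k < n) (ψ : AddChar F ℂˣ) (y : Matrix (Fin m) (Fin k) F) :
    psiN ψ (yg n y) = 1 := by
  rw [psiN_eq, yg_val hk, superdiag_one_add]
  have : superdiag F (yM n y) = 0 := by
    unfold superdiag
    refine Finset.sum_eq_zero fun i _ => Finset.sum_eq_zero fun j _ => ?_
    split_ifs with h
    · by_cases h1 : (i : ℕ) < m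
      · exact (yM_sup y).2 i j (by omega)
      · exact (yM_sup y).1 i j (by omega)
    · rfl
  rw [this]; simp

lemma yg_sum (hk : m + k < n) (f : GL (Fin n) F → ℂ) {h : GL (Fin n) F}
    (H : ∀ y : Matrix (Fin m) (Fin k) F, ∃ y' : Matrix (Fin m) (Fin k) F,
      yg n y * h = h * yg n y') :
    ∑ y : Matrix (Fin m) (Fin k) F, f (yg n y * h) =
      ∑ y : Matrix (Fin m) (Fin k) F, f (h * yg n y) := by
  choose p hp using H
  have hinj : Function.Injective p := by
    intro y y' e
    apply yg_inj hk
    have : yg n y * h = yg n y' * h := by rw [hp, hp, e]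
    exact mul_right_cancel this
  have hbij : Function.Bijective p := Finite.injective_iff_bijective.1 hinj
  rw [← (Equiv.ofBijective p hbij).sum_comp (fun y => f (h * yg n y))]
  refine Finset.sum_congr rfl fun y _ => ?_
  rw [hp]; rfl

lemma emb_Ysup (hmn : m ≤ n) (g : Matrix (Fin m) (Fin m) F) {X : Matrix (Fin n) (Fin n) F}
    (hX : Ysup m k X) : Ysup m k (embM n g * X) := by
  constructor
  · intro i c h
    rw [Matrix.mul_apply]
    apply Finset.sum_eq_zero
    intro l _
    by_cases hl : l = i
    · rw [hl, hX.1 i c h, mul_zero]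
    · rw [embM_ge _ h, Matrix.one_apply_ne (Ne.symm hl), zero_mul]
  · intro i c h
    rw [Matrix.mul_apply]
    apply Finset.sum_eq_zero
    intro l _
    rw [hX.2 l c h, mul_zero]

/-- `Y` on the left of `diag(g,1)` can be moved to the right. -/
lemma yg_emb (hk : m + k < n) (hmn : m ≤ n) (g : GL (Fin m) F) (y : Matrix (Fin m) (Fin k) F) :
    ∃ y' : Matrix (Fin m) (Fin k) F, yg n y * emb hmn g = emb hmn g * yg n y' := by
  obtain ⟨y', hy'⟩ := yg_surj hk (emb_Ysup hmn (g⁻¹).val (yM_sup y))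
  refine ⟨y', ?_⟩
  apply Units.ext
  rw [Units.val_mul, Units.val_mul, hy', yg_val hk, add_mul, mul_add, one_mul, mul_one, emb_val,
    mul_embM_of _ (fun i j h => (yM_sup y).2 i j (by omega)), ← mul_assoc, ← embM_mul hmn,
    ← Units.val_mul, mul_inv_cancel, Units.val_one, embM_one, one_mul]

/-- A column element with support in rows `< m` can be absorbed. -/
lemma emb_col (hk : m + k < n) (hmn : m ≤ n) (g : GL (Fin m) F) (r : Fin n) (hr : n - k ≤ (r : ℕ))
    (z : Fin (r : ℕ) → F) (hz : ∀ i : Fin (r : ℕ), m ≤ (i : ℕ) → z i = 0) :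
    ∃ y : Matrix (Fin m) (Fin k) F, emb hmn g * cg r z = yg n y * emb hmn g := by
  have hs : Ysup m k (colM r z) := by
    constructor
    · intro i c h
      unfold colM
      split_ifs
      · by_cases hi : (i : ℕ) < r
        · rw [extv_lt _ hi]; exact hz _ h
        · exact extv_ge _ (by omega)
      · rfl
    · intro i c h
      unfold colM
      rw [if_neg]
      intro h'; subst h'; omega
  have hs2 := emb_Ysup hmn g.val hs
  obtain ⟨y', hy'⟩ := yg_surj hk hs2
  refine ⟨y', ?_⟩
  apply Units.ext
  rw [Units.val_mul, Units.val_mul, hy', cg_val, add_mul, mul_add, one_mul, mul_one, emb_val,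
    mul_embM_of _ (fun i j h => hs2.2 i j (by omega))]

lemma colM_low (r : Fin n) (z : Fin (r : ℕ) → F) (hz : ∀ i : Fin (r : ℕ), (i : ℕ) < m → z i = 0)
    (i c : Fin n) (h : (i : ℕ) < m) : colM r z i c = 0 := by
  unfold colM
  split_ifs
  · by_cases hi : (i : ℕ) < r
    · rw [extv_lt _ hi]; exact hz _ h
    · exact extv_ge _ (by omega)
  · rfl

lemma colM_left (r : Fin n) (z : Fin (r : ℕ) → F) (i c : Fin n) (h : (c : ℕ) < r) :
    colM r z i c = 0 := by
  unfold colM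
  rw [if_neg]
  intro h'; subst h'; omega

lemma emb_col_comm (hmn : m ≤ n) (g : GL (Fin m) F) (r : Fin n) (hr : m + 1 ≤ (r : ℕ))
    (z : Fin (r : ℕ) → F) (hz : ∀ i : Fin (r : ℕ), (i : ℕ) < m → z i = 0) :
    emb hmn g * cg r z = cg r z * emb hmn g := by
  apply Units.ext
  rw [Units.val_mul, Units.val_mul, cg_val, add_mul, mul_add, one_mul, mul_one, emb_val,
    mul_embM_of _ (fun i j h => colM_left r z i j (by omega)), embM_mul_of _ (colM_low r z hz)]

lemma yg_col (hk : m + k < n) (r : Fin n) (hr : m + 1 ≤ (r : ℕ))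
    (z : Fin (r : ℕ) → F) (hz : ∀ i : Fin (r : ℕ), (i : ℕ) < m → z i = 0)
    (y : Matrix (Fin m) (Fin k) F) :
    ∃ y' : Matrix (Fin m) (Fin k) F, yg n y * cg r z = cg r z * yg n y' := by
  have hCY : ∀ X, Ysup m k X → colM r z * X = 0 := fun X hX =>
    supp_sq (j := m) (fun i c h => colM_left r z i c (by omega)) hX.1
  have hs : Ysup m k (yM n y + yM n y * colM r z) := by
    constructor
    · intro i c h
      rw [Matrix.add_apply, (yM_sup y).1 i c h, zero_add, Matrix.mul_apply]
      apply Finset.sum_eq_zero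
      intro l _
      rw [(yM_sup y).1 i l h, zero_mul]
    · intro i c h
      rw [Matrix.add_apply, (yM_sup y).2 i c h, zero_add, Matrix.mul_apply]
      apply Finset.sum_eq_zero
      intro l _
      by_cases hl : (l : ℕ) < n - k
      · rw [(yM_sup y).2 i l hl, zero_mul]
      · rw [colM_upper r z l c (by omega), mul_zero]
  obtain ⟨y', hy'⟩ := yg_surj hk hs
  refine ⟨y', ?_⟩
  apply Units.ext
  rw [Units.val_mul, Units.val_mul, hy', cg_val, yg_val hk, add_mul 1 (colM r z), mul_add (colM r z),
    hCY _ hs, one_mul, mul_one, add_zero, add_mul, mul_add, mul_add, one_mul, one_mul, mul_one]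
  abel

lemma emb_nx {a : ℕ} (hmn : m ≤ n) (g : GL (Fin m) F) (x : Matrix (Fin a) (Fin m) F) :
    ∃ x' : Matrix (Fin a) (Fin m) F, emb hmn g * nx n x = nx n x' * emb hmn g := by
  refine ⟨x * (g⁻¹).val, ?_⟩
  apply Units.ext
  have hlow : ∀ (x : Matrix (Fin a) (Fin m) F) (i j : Fin n), (i : ℕ) < m → nxM n x i j = 0 := by
    intro x i j h
    rw [nxM, dif_neg (by omega)]
  have hmul : ∀ (x : Matrix (Fin a) (Fin m) F) (h : Matrix (Fin m) (Fin m) F),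
      nxM n x * embM n h = nxM n (x * h) := by
    intro x h
    ext i c
    rw [Matrix.mul_apply]
    by_cases hi : m ≤ (i : ℕ) ∧ (i : ℕ) < m + a
    · have e : ∀ l : Fin n, nxM n x i l = extv (x ⟨(i : ℕ) - m, by omega⟩) l := by
        intro l
        unfold nxM extv
        by_cases hl : (l : ℕ) < m
        · rw [dif_pos ⟨hi.1, hi.2, hl⟩, dif_pos hl]
        · rw [dif_neg (by omega), dif_neg hl]
      simp only [e, mul_comm (extv _ _)]
      rw [sum_extv hmn]
      by_cases hc : (c : ℕ) < m
      · rw [nxM, dif_pos ⟨hi.1, hi.2, hc⟩, Matrix.mul_apply]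
        refine Finset.sum_congr rfl fun l _ => ?_
        rw [embM_lt _ (i := Fin.castLE hmn l) l.2, extv_lt _ hc, mul_comm]
        rfl
      · rw [nxM, dif_neg (by omega)]
        apply Finset.sum_eq_zero
        intro l _
        rw [embM_lt _ (i := Fin.castLE hmn l) l.2, extv_ge _ (by omega), zero_mul]
    · rw [nxM, dif_neg (by omega)]
      apply Finset.sum_eq_zero
      intro l _
      rw [nxM, dif_neg (by omega), zero_mul]
  rw [Units.val_mul, Units.val_mul, nx_val, nx_val, add_mul, mul_add, one_mul, mul_one, emb_val,
    embM_mul_of _ (hlow x), hmul, Matrix.mul_assoc, ← Units.val_mul, inv_mul_cancel, Units.val_one,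
    Matrix.mul_one]

end yg

/-! ### Final assembly -/

lemma Cmat_eq {n m : ℕ} (hmn : m < n) (g : GL (Fin m) F) :
    toGL (Cmat hmn g.val) = wg hmn * emb hmn.le g := by
  rw [← toGL_coe (wg hmn * emb hmn.le g)]
  congr 1
  ext i j
  change _ = ((wg hmn * emb hmn.le g : GL (Fin n) F)).val i j
  rw [Units.val_mul, wg_mul_apply, emb_val]
  have h1 := sE_val hmn i
  have hi := i.2
  unfold Cmat
  split_ifs at h1 with h
  · rw [dif_pos h, embM_ge _ (by omega), Matrix.one_apply]
    simp only [Fin.ext_iff, h1, eq_comm]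
  · rw [dif_neg h, embM_lt _ (by omega)]
    simp only [extv, h1]

lemma Bmat_eq {n m k : ℕ} (hmn : m < n) (hk : k ≤ n - m - 1) (g : GL (Fin m) F)
    (y : Matrix (Fin m) (Fin k) F) :
    toGL (Bmat hmn hk g.val y) = wg hmn * (yg n y * emb hmn.le g) := by
  have hk' : m + k < n := by omega
  rw [← toGL_coe (wg hmn * (yg n y * emb hmn.le g))]
  congr 1
  ext i j
  change _ = ((wg hmn * (yg n y * emb hmn.le g) : GL (Fin n) F)).val i j
  rw [Units.val_mul, wg_mul_apply, Units.val_mul, yg_val hk', add_mul, one_mul, emb_val,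
    mul_embM_of _ (fun i j h => (yM_sup y).2 i j (by omega)), Matrix.add_apply]
  have h1 := sE_val hmn i
  have hi := i.2
  unfold Bmat
  split_ifs at h1 with h
  · rw [dif_pos h, embM_ge _ (by omega), Matrix.one_apply, (yM_sup y).1 _ _ (by omega), add_zero]
    simp only [Fin.ext_iff, h1, eq_comm]
  · rw [dif_neg h, embM_lt _ (by omega)]
    by_cases hj : (j : ℕ) < m
    · rw [dif_pos hj, (yM_sup y).2 _ _ (by omega), add_zero]
      simp only [extv, h1, dif_pos hj]
    · rw [dif_neg hj, extv_ge _ (by omega), zero_add]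
      unfold yM
      by_cases hj2 : n - k ≤ (j : ℕ)
      · rw [dif_pos hj2, dif_pos ⟨by omega, hj2⟩]
        simp only [h1]
      · rw [dif_neg hj2, dif_neg (by omega)]

lemma Amat_eq {n m k : ℕ} (hmn : m < n) (hk : k ≤ n - m - 1) (g : GL (Fin m) F)
    (x : Matrix (Fin (n - m - 1 - k)) (Fin m) F) :
    toGL (Amat hmn hk g.val x) = emb hmn.le g * nx n x := by
  rw [← toGL_coe (emb hmn.le g * nx n x)]
  congr 1
  ext i j
  change _ = ((emb hmn.le g * nx n x : GL (Fin n) F)).val i j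
  rw [Units.val_mul, nx_val, mul_add, mul_one, emb_val,
    embM_mul_of _ (fun i j h => by rw [nxM, dif_neg (by omega)]), Matrix.add_apply]
  have hi := i.2
  unfold Amat
  by_cases h : (i : ℕ) < m
  · have h0 : nxM n x i j = 0 := by rw [nxM, dif_neg (by omega)]
    rw [dif_pos h, embM_lt _ h, h0, add_zero]
    rfl
  · rw [dif_neg h, embM_ge _ (by omega), Matrix.one_apply]
    by_cases hj : (j : ℕ) < m
    · rw [dif_pos hj, if_neg (by intro e; subst e; omega), zero_add, nxM]
      by_cases h2 : (i : ℕ) < n - k - 1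
      · rw [dif_pos h2, dif_pos ⟨by omega, by omega, hj⟩]
      · rw [dif_neg h2, dif_neg (by omega)]
    · rw [dif_neg hj, nxM, dif_neg (by omega), add_zero]
      simp only [Fin.ext_iff]

section final
variable {n m : ℕ} {V : Type*} [AddCommGroup V] [Module ℂ V]
    {π : Representation ℂ (GL (Fin n) F) V} {ψ : AddChar F ℂˣ}

lemma wg_whit {lam : V →ₗ[ℂ] ℂ} (hlam : IsWhittaker π (psiN ψ) lam) (hmn : m < n)
    {X : Matrix (Fin n) (Fin n) F} {h : GL (Fin n) F} (hX : h.val = 1 + X)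
    (h0 : ∀ i j : Fin n, (i : ℕ) < m → X i j = 0)
    (hu : ∀ i j : Fin n, m ≤ (j : ℕ) → (j : ℕ) ≤ i → X i j = 0)
    (hl : ∀ i j : Fin n, (j : ℕ) < m → (i : ℕ) + 1 = n → X i j = 0)
    (g : GL (Fin n) F) (v : V) :
    lam (π (wg hmn * (h * g)) v) = ps ψ (superdiag F X) * lam (π (wg hmn * g) v) := by
  have e : wg hmn * (h * g) = (wg hmn * h * (wg hmn)⁻¹) * (wg hmn * g) := by group
  obtain ⟨a, b⟩ := wg_unip hmn h0 hu hl
  rw [e, map_mul, Module.End.mul_apply, hlam _ (by rw [wg_conj, hX]; exact a), psiN_eq, wg_conj, hX, b]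

lemma psiN_emb (ψ : AddChar F ℂˣ) (hmn : m ≤ n) (u : GL (Fin m) F) (hu : IsUnip F u.val) :
    IsUnip F (emb hmn u).val ∧ psiN ψ (emb hmn u) = psiN ψ u := by
  have hoff : ∀ i j : Fin n, i ≠ j → (m ≤ (i : ℕ) ∨ m ≤ (j : ℕ)) → embM n u.val i j = 0 := by
    intro i j hij h
    by_cases hi : (i : ℕ) < m
    · rw [embM_lt _ hi, extv_ge _ (by omega)]
    · rw [embM_ge _ (by omega), Matrix.one_apply_ne hij]
  have hin : ∀ (i j : Fin m), embM n u.val (Fin.castLE hmn i) (Fin.castLE hmn j) = u.val i j := by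
    intro i j
    rw [embM_lt _ (i := Fin.castLE hmn i) i.2, extv_lt _ (i := Fin.castLE hmn j) j.2]
    rfl
  constructor
  · rw [emb_val]
    constructor
    · intro i
      by_cases hi : (i : ℕ) < m
      · have := hin ⟨i, hi⟩ ⟨i, hi⟩
        rw [hu.1] at this
        exact this
      · rw [embM_ge _ (by omega), Matrix.one_apply_eq]
    · intro i j hij
      by_cases hi : (i : ℕ) < m
      · have := hin ⟨i, hi⟩ ⟨j, by omega⟩
        rw [hu.2 _ _ hij] at this
        exact this
      · exact hoff i j (by intro e; subst e; omega) (by omega)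
  · rw [psiN_eq, psiN_eq, emb_val]
    congr 1
    unfold superdiag
    symm
    refine Fintype.sum_of_injective (Fin.castLE hmn) (Fin.castLE_injective hmn) _ _ ?_ ?_
    · intro i hi
      apply Finset.sum_eq_zero
      intro j _
      split_ifs with h
      · refine hoff i j (by intro e; subst e; omega) (Or.inl ?_)
        by_contra hc
        exact hi ⟨⟨i, by omega⟩, rfl⟩
      · rfl
    · intro i
      refine Fintype.sum_of_injective (Fin.castLE hmn) (Fin.castLE_injective hmn) _ _ ?_ ?_
      · intro j hj
        split_ifs with h
        · refine hoff _ j (by intro e; subst e; simp at h) (Or.inr ?_)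
          by_contra hc
          exact hj ⟨⟨j, by omega⟩, rfl⟩
        · rfl
      · intro j
        simp only [hin, Fin.val_castLE]

variable {k : ℕ}

/-- The dual-side functional with coefficients `f`. -/
noncomputable def Lf (π : Representation ℂ (GL (Fin n) F) V) (k : ℕ) (hmn : m < n)
    (lam : V →ₗ[ℂ] ℂ) (f : GL (Fin m) F → ℂ) : V →ₗ[ℂ] ℂ :=
  ∑ g : GL (Fin m) F, ∑ y : Matrix (Fin m) (Fin k) F,
    f g • (lam ∘ₗ π (wg hmn * (yg n y * emb hmn.le g)))

lemma Lf_apply (hmn : m < n) (lam : V →ₗ[ℂ] ℂ) (f : GL (Fin m) F → ℂ) (v : V) :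
    Lf π k hmn lam f v = ∑ g : GL (Fin m) F, ∑ y : Matrix (Fin m) (Fin k) F,
      f g * lam (π (wg hmn * (yg n y * emb hmn.le g)) v) := by
  simp [Lf, LinearMap.sum_apply]

lemma Lf_R2 {lam : V →ₗ[ℂ] ℂ} (hlam : IsWhittaker π (psiN ψ) lam) (hk : m + k < n) (hmn : m < n)
    (f : GL (Fin m) F → ℂ) (r : Fin n) (hr : m + 1 ≤ (r : ℕ)) (z : Fin (r : ℕ) → F)
    (hz : ∀ i : Fin (r : ℕ), (i : ℕ) < m → z i = 0) (v : V) :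
    Lf π k hmn lam f (π (cg r z) v) = ps ψ (a0 r ⬝ᵥ z) * Lf π k hmn lam f v := by
  rw [Lf_apply, Lf_apply, Finset.mul_sum]
  refine Finset.sum_congr rfl fun g _ => ?_
  have h := yg_sum hk (fun x => f g * lam (π (wg hmn * (x * emb hmn.le g)) v))
    (yg_col hk r hr z hz)
  have e : ∀ y : Matrix (Fin m) (Fin k) F,
      f g * lam (π (wg hmn * (yg n y * emb hmn.le g)) (π (cg r z) v)) =
      f g * lam (π (wg hmn * ((yg n y * cg r z) * emb hmn.le g)) v) := by
    intro y
    rw [← Module.End.mul_apply, ← map_mul, mul_assoc (wg hmn), mul_assoc (yg n y),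
      emb_col_comm hmn.le g r hr z hz, mul_assoc (yg n y)]
  simp only [e]
  rw [h, Finset.mul_sum]
  refine Finset.sum_congr rfl fun y _ => ?_
  rw [mul_assoc (cg r z), wg_whit hlam hmn (cg_val r z) (colM_low r z hz)
    (fun i j _ h => colM_upper r z i j h) (fun i j h _ => colM_left r z i j (by omega)),
    superdiag_colM]
  ring

lemma Lf_R1 {lam : V →ₗ[ℂ] ℂ} (hlam : IsWhittaker π (psiN ψ) lam) (hk : m + k < n) (hmn : m < n)
    (f : GL (Fin m) F → ℂ) : Lf π k hmn lam f ∈ Wh π ψ (n - k) := by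
  intro r hr z v
  set z1 : Fin (r : ℕ) → F := fun i => if (i : ℕ) < m then z i else 0 with hz1
  set z2 : Fin (r : ℕ) → F := fun i => if (i : ℕ) < m then 0 else z i with hz2
  have hz : z = z1 + z2 := by
    funext i
    simp only [hz1, hz2, Pi.add_apply]
    split_ifs <;> simp
  have ha : (a0 r : Fin (r : ℕ) → F) ⬝ᵥ z1 = 0 := by
    apply Finset.sum_eq_zero
    intro i _
    simp only [a0, hz1]
    have := i.2
    split_ifs <;> first | omega | simp
  have h1 : ∀ v, Lf π k hmn lam f (π (cg r z1) v) = Lf π k hmn lam f v := by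
    intro v
    rw [Lf_apply, Lf_apply]
    refine Finset.sum_congr rfl fun g _ => ?_
    obtain ⟨y0, hy0⟩ := emb_col hk hmn.le g r hr z1 (fun i hi => by
      simp only [hz1]; rw [if_neg (by omega)])
    rw [← Equiv.sum_comp (Equiv.addRight y0)
      (fun y => f g * lam (π (wg hmn * (yg n y * emb hmn.le g)) v))]
    refine Finset.sum_congr rfl fun y _ => ?_
    rw [← Module.End.mul_apply, ← map_mul, mul_assoc (wg hmn), mul_assoc (yg n y), hy0,
      Equiv.coe_addRight, yg_add hk, mul_assoc (yg n y)]
  rw [hz, cg_add, map_mul, Module.End.mul_apply, h1, Lf_R2 hlam hk hmn f r (by omega) z2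
    (fun i hi => by simp only [hz2]; rw [if_pos hi]), dotProduct_add, ha, zero_add]

lemma Lf_R3 {lam : V →ₗ[ℂ] ℂ} (hlam : IsWhittaker π (psiN ψ) lam) (hk : m + k < n) (hmn : m < n)
    (f : GL (Fin m) F → ℂ) {a : ℕ} (ha : m + a + k < n) (x : Matrix (Fin a) (Fin m) F) (v : V) :
    Lf π k hmn lam f (π (nx n x) v) = Lf π k hmn lam f v := by
  rw [Lf_apply, Lf_apply]
  refine Finset.sum_congr rfl fun g _ => Finset.sum_congr rfl fun y _ => ?_
  obtain ⟨x', hx'⟩ := emb_nx hmn.le g x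
  have hN1 : ∀ i j : Fin n, ((i : ℕ) < m ∨ m + a ≤ (i : ℕ)) → nxM n x' i j = 0 := by
    intro i j h
    rw [nxM, dif_neg (by omega)]
  have hN2 : ∀ i j : Fin n, m ≤ (j : ℕ) → nxM n x' i j = 0 := by
    intro i j h
    rw [nxM, dif_neg (by omega)]
  have hY := yM_sup (n := n) y
  have hYN : yM n y * nxM n x' = 0 :=
    supp_sq (j := n - k) (fun i c h => hY.2 i c h) (fun i c h => hN1 i c (by omega))
  have hYY := Ysup_sq hk hY hY
  set h : GL (Fin n) F := yg n y * nx n x' * (yg n y)⁻¹ with hh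
  have hinv : (yg n y)⁻¹ = yg n (-y) := by
    have h0 : yg n (0 : Matrix (Fin m) (Fin k) F) = 1 := by
      have := yg_add hk (0 : Matrix (Fin m) (Fin k) F) 0
      rw [add_zero] at this
      exact left_eq_mul.1 this
    rw [inv_eq_iff_mul_eq_one, ← yg_add hk, add_neg_cancel, h0]
  have hneg : yM n (-y) = - yM n y := by
    have := yM_add (n := n) y (-y)
    rw [add_neg_cancel] at this
    have h0 : yM n (0 : Matrix (Fin m) (Fin k) F) = 0 := by
      have := yM_add (n := n) (0 : Matrix (Fin m) (Fin k) F) 0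
      rw [add_zero] at this
      exact left_eq_add.1 this
    rw [h0] at this
    exact (neg_eq_of_add_eq_zero_right this.symm).symm
  have hX : h.val = 1 + (nxM n x' - nxM n x' * yM n y) := by
    rw [hh, hinv, Units.val_mul, Units.val_mul, yg_val hk, yg_val hk, nx_val, hneg]
    simp only [mul_add, add_mul, mul_one, one_mul, mul_neg, hYN, hYY, zero_mul]
    abel
  have hNY : ∀ i j : Fin n, ((i : ℕ) < m ∨ m + a ≤ (i : ℕ) ∨ (j : ℕ) < n - k) →
      (nxM n x' * yM n y) i j = 0 := by
    intro i j hij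
    rw [Matrix.mul_apply]
    apply Finset.sum_eq_zero
    intro l _
    by_cases hj : (j : ℕ) < n - k
    · rw [hY.2 l j hj, mul_zero]
    · rw [hN1 i l (by omega), zero_mul]
  have e : wg hmn * (yg n y * emb hmn.le g) * nx n x = wg hmn * (h * (yg n y * emb hmn.le g)) := by
    rw [mul_assoc (wg hmn), mul_assoc (yg n y), hx', hh]
    group
  rw [← Module.End.mul_apply, ← map_mul, e, wg_whit hlam hmn hX]
  · have : superdiag F (nxM n x' - nxM n x' * yM n y) = 0 := by
      unfold superdiag
      refine Finset.sum_eq_zero fun i _ => Finset.sum_eq_zero fun j _ => ?_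
      split_ifs with hij
      · rw [Matrix.sub_apply, hNY i j (by omega), sub_zero]
        rw [nxM, dif_neg (by omega)]
      · rfl
    rw [this, AddChar.map_zero_eq_one, one_mul]
  · intro i j hi
    rw [Matrix.sub_apply, hN1 i j (Or.inl hi), hNY i j (Or.inl hi), sub_zero]
  · intro i j hj hij
    rw [Matrix.sub_apply, hN2 i j hj, hNY i j (by omega), sub_zero]
  · intro i j hj hi
    rw [Matrix.sub_apply, hN1 i j (by omega), hNY i j (by omega), sub_zero]

lemma Lf_emb (hmn : m < n) (lam : V →ₗ[ℂ] ℂ) (f : GL (Fin m) F → ℂ) (h : GL (Fin m) F) (v : V) :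
    Lf π k hmn lam f (π (emb hmn.le h)⁻¹ v) = Lf π k hmn lam (fun g => f (g * h)) v := by
  rw [Lf_apply, Lf_apply, ← Equiv.sum_comp (Equiv.mulRight h)]
  refine Finset.sum_congr rfl fun g _ => Finset.sum_congr rfl fun y _ => ?_
  rw [← Module.End.mul_apply, ← map_mul, Equiv.coe_mulRight, map_mul (emb hmn.le)]
  congr 4
  group

variable {W : Type*} [AddCommGroup W] [Module ℂ W] (τ : Representation ℂ (GL (Fin m) F) W)

/-- `Lf` at a fixed vector as a functional in the second representation. -/
noncomputable def cf (π : Representation ℂ (GL (Fin n) F) V) (k : ℕ) (hmn : m < n)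
    (lam : V →ₗ[ℂ] ℂ) (mu : W →ₗ[ℂ] ℂ) (v : V) : W →ₗ[ℂ] ℂ :=
  ∑ g : GL (Fin m) F, ∑ y : Matrix (Fin m) (Fin k) F,
    lam (π (wg hmn * (yg n y * emb hmn.le g)) v) • (mu ∘ₗ τ g)

lemma cf_apply (hmn : m < n) (lam : V →ₗ[ℂ] ℂ) (mu : W →ₗ[ℂ] ℂ) (v : V) (w : W) :
    cf τ π k hmn lam mu v w = Lf π k hmn lam (fun g => mu (τ g w)) v := by
  rw [Lf_apply]
  simp [cf, LinearMap.sum_apply, mul_comm]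

end final
theorem gamma_eq_bessel_sum
    (q : ℕ) (hq : Fintype.card F = q)
    (ψ : AddChar F ℂˣ) (hψ : ∃ a : F, ψ a ≠ 1)
    (n m : ℕ) (hm1 : 1 ≤ m) (hnm : m < n)
    {V W : Type*} [AddCommGroup V] [Module ℂ V] [FiniteDimensional ℂ V] [Nontrivial V]
    [AddCommGroup W] [Module ℂ W] [FiniteDimensional ℂ W] [Nontrivial W]
    (π : Representation ℂ (GL (Fin n) F) V)
    (τ : Representation ℂ (GL (Fin m) F) W)
    (hπirr : IsIrreducible π) (hπcusp : IsCuspidal π)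
    (hτirr : IsIrreducible τ)
    (hτgen : ∃ mu : W →ₗ[ℂ] ℂ, mu ≠ 0 ∧ IsWhittaker τ (psiN ψ) mu) :
    ∀ (k : ℕ) (hk : k ≤ n - m - 1)
      (lam : V →ₗ[ℂ] ℂ), IsWhittaker π (psiN ψ) lam →
      ∀ v : V, ∀ mu : W →ₗ[ℂ] ℂ, IsWhittaker τ (fun u => (psiN ψ u)⁻¹) mu → ∀ w : W,
      (((UnipFinset F m).card : ℂ)⁻¹ *
          ∑ g : GL (Fin m) F,
            Bessel π (psiN ψ) (toGL (Cmat hnm (Units.val g))) *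
              Bessel τ (fun u => (psiN ψ u)⁻¹) g) *
          (q : ℂ) ^ (k * m) * ((UnipFinset F m).card : ℂ)⁻¹ *
          ∑ g : GL (Fin m) F, ∑ x : Matrix (Fin (n - m - 1 - k)) (Fin m) F,
            lam (π (toGL (Amat hnm hk (Units.val g) x)) v) * mu (τ g w)
        = ((UnipFinset F m).card : ℂ)⁻¹ *
          ∑ g : GL (Fin m) F, ∑ y : Matrix (Fin m) (Fin k) F,
            lam (π (toGL (Bmat hnm hk (Units.val g) y)) v) * mu (τ g w) := by
  intro k hk lam hlam v mu hmu w
  subst hq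
  have hfun : (fun u : GL (Fin m) F => (psiN ψ u)⁻¹) = psiN ψ⁻¹ := funext fun u => psiN_inv_eq ψ u
  rw [hfun] at hmu ⊢
  by_cases hl0 : lam = 0
  · subst hl0; simp
  by_cases hm0 : mu = 0
  · subst hm0; simp
  have hψ' : ∃ a : F, ψ⁻¹ a ≠ 1 := by
    obtain ⟨a, ha⟩ := hψ
    refine ⟨-a, ?_⟩
    rwa [AddChar.inv_apply, neg_neg]
  obtain ⟨v0, he, h1⟩ := mult_one π ψ hψ hπirr hlam hl0
  obtain ⟨w0, he', h1'⟩ := mult_one τ ψ⁻¹ hψ' hτirr hmu hm0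
  have hk' : m + k < n := by omega
  have ha : m + (n - m - 1 - k) + 1 = n - k := by omega
  have hwh : IsWhittaker τ (psiN ψ⁻¹) (cf τ π k hnm lam mu v0) := by
    intro u hu w
    obtain ⟨hu1, hu2⟩ := psiN_emb ψ hnm.le u hu
    have e : (fun g => mu (τ g (τ u w))) = fun g => (fun g => mu (τ g w)) (g * u) := by
      funext g
      simp only [map_mul, Module.End.mul_apply]
    have e2 : π (emb hnm.le u)⁻¹ v0 = (psiN ψ u)⁻¹ • v0 := by
      have h3 := mo_vec he h1 hu1
      rw [hu2] at h3
      have h4 : π (emb hnm.le u)⁻¹ (π (emb hnm.le u) v0) = v0 := by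
        rw [← Module.End.mul_apply, ← map_mul, inv_mul_cancel, map_one, Module.End.one_apply]
      rw [h3, map_smul] at h4
      rw [eq_inv_smul_iff₀ (psiN_ne_zero ψ u), h4]
    rw [cf_apply, e, ← Lf_emb hnm lam (fun g => mu (τ g w)) u v0, e2, map_smul, cf_apply, smul_eq_mul, psiN_inv_eq]
  have hc0 : cf τ π k hnm lam mu v0 w0 = (Fintype.card F : ℂ) ^ (k * m) *
      ∑ g : GL (Fin m) F, Bessel π (psiN ψ) (toGL (Cmat hnm (Units.val g))) *
        Bessel τ (psiN ψ⁻¹) g := by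
    rw [cf_apply, Lf_apply, Finset.mul_sum]
    refine Finset.sum_congr rfl fun g _ => ?_
    have h2 := yg_sum hk' (fun x => mu (τ g w0) * lam (π (wg hnm * x) v0)) (yg_emb hk' hnm.le g)
    rw [h2]
    have h3 : ∀ y : Matrix (Fin m) (Fin k) F, mu (τ g w0) *
        lam (π (wg hnm * (emb hnm.le g * yg n y)) v0) =
        Bessel π (psiN ψ) (toGL (Cmat hnm (Units.val g))) * Bessel τ (psiN ψ⁻¹) g := by
      intro y
      rw [← mul_assoc, map_mul, Module.End.mul_apply, mo_vec he h1 (yg_unip hk' y), yg_psiN hk',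
        one_smul, mo_bessel he, mo_bessel he', Cmat_eq, mul_comm]
    simp only [h3]
    rw [Finset.sum_const, Finset.card_univ, card_mat, nsmul_eq_mul, Nat.cast_pow]
  have key := low_expand hψ hπcusp he h1 (m := m) (a := n - m - 1 - k) (by omega) hnm
    (l := Lf π k hnm lam (fun g => mu (τ g w)))
    (by rw [ha]; exact Lf_R1 hlam hk' hnm _)
    (fun r hr _ z hz v => Lf_R2 hlam hk' hnm _ r hr z hz v)
    (fun x v => Lf_R3 hlam hk' hnm _ (by omega) x v) v
  have hcoef : ∀ g : GL (Fin m) F,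
      Lf π k hnm lam (fun g => mu (τ g w)) (π (emb hnm.le g)⁻¹ v0) =
        cf τ π k hnm lam mu v0 w0 * mu (τ g w) := by
    intro g
    rw [Lf_emb, ← mo_unique he' hwh, cf_apply]
    simp only [map_mul, Module.End.mul_apply]
  have hR : ∑ g : GL (Fin m) F, ∑ y : Matrix (Fin m) (Fin k) F,
      lam (π (toGL (Bmat hnm hk (Units.val g) y)) v) * mu (τ g w) =
      Lf π k hnm lam (fun g => mu (τ g w)) v := by
    rw [Lf_apply]
    refine Finset.sum_congr rfl fun g _ => Finset.sum_congr rfl fun y _ => ?_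
    rw [Bmat_eq, mul_comm]
  have hS : ∑ g : GL (Fin m) F, ∑ x : Matrix (Fin (n - m - 1 - k)) (Fin m) F,
      Lf π k hnm lam (fun g => mu (τ g w)) (π (emb hnm.le g)⁻¹ v0) *
        lam (π (emb hnm.le g * nx n x) v) = cf τ π k hnm lam mu v0 w0 *
      ∑ g : GL (Fin m) F, ∑ x : Matrix (Fin (n - m - 1 - k)) (Fin m) F,
        lam (π (toGL (Amat hnm hk (Units.val g) x)) v) * mu (τ g w) := by
    rw [Finset.mul_sum]
    refine Finset.sum_congr rfl fun g _ => ?_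
    rw [Finset.mul_sum]
    refine Finset.sum_congr rfl fun x _ => ?_
    rw [hcoef, Amat_eq]
    ring
  rw [hR, key, hS, hc0]
  ring

end Stmt2
end

section
/- Let F ⊆ E be an extension of finite fields with |F| = q and [E : F] = n. A multiplicative character η : Eˣ → ℂˣ is F-regular (i.e. the n characters x ↦ η(x^{q^i}) for 0 ≤ i ≤ n−1 are pairwise distinct) if and only if there is no intermediate field K with F ⊆ K ⊊ E and no character η′ : Kˣ → ℂˣ such that η = η′ ∘ N_{E/K}, where N_{E/K} : Eˣ → Kˣ is the field norm. -/
/-!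
Statement 3: a multiplicative character of `Eˣ` is `F`-regular if and only if it does not
factor through the norm map `N_{E/K}` for any proper intermediate field `F ⊆ K ⊊ E`.
-/

namespace Stmt3

theorem hilbert90 {K E : Type*} [Field K] [Fintype K] [Field E] [Fintype E] [Algebra K E]
    (x : Eˣ) (hx : Algebra.norm K (x : E) = 1) : ∃ y : Eˣ, x = y / y ^ Fintype.card K := by
  obtain ⟨u', hu'⟩ := IsCyclic.exists_generator (α := Eˣ)
  have hord' : orderOf u' = Fintype.card E - 1 := by
    rw [orderOf_eq_card_of_forall_mem_zpowers hu', Nat.card_units, Nat.card_eq_fintype_card]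
  obtain ⟨a, ha⟩ := (mem_powers_iff_mem_zpowers).2 (hu' x)
  have hQ : 1 < Fintype.card K := Fintype.one_lt_card
  have hE : 1 < Fintype.card E := Fintype.one_lt_card
  have hdvd : Fintype.card K - 1 ∣ Fintype.card E - 1 := by
    rw [Module.card_eq_pow_finrank (K := K) (V := E)]
    simpa using Nat.sub_dvd_pow_sub_pow (Fintype.card K) 1 (Module.finrank K E)
  have h1 := FiniteField.algebraMap_norm_eq_pow (K := K) (x := (x : E))
  rw [hx, map_one, Nat.card_eq_fintype_card, Nat.card_eq_fintype_card] at h1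
  obtain ⟨S, hS⟩ := hdvd
  rw [hS, Nat.mul_div_cancel_left _ (by omega)] at h1
  have hS0 : 0 < S := by
    rcases Nat.eq_zero_or_pos S with h | h
    · rw [h] at hS; omega
    · exact h
  have h2 : u' ^ (a * S) = 1 := by
    rw [pow_mul]
    ext
    simp only at ha
    rw [ha]
    simpa using h1.symm
  have h3 := orderOf_dvd_of_pow_eq_one h2
  rw [hord', hS] at h3
  obtain ⟨b, hb⟩ := Nat.dvd_of_mul_dvd_mul_right hS0 h3
  refine ⟨(u' ^ b)⁻¹, ?_⟩
  simp only at ha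
  rw [← ha, hb, eq_div_iff_mul_eq', inv_pow, ← div_eq_mul_inv, div_eq_iff_eq_mul,
    eq_inv_mul_iff_mul_eq, ← pow_mul, ← pow_add]
  congr 1
  obtain ⟨c, hc⟩ : ∃ c, Fintype.card K = c + 1 := ⟨Fintype.card K - 1, by omega⟩
  rw [hc]
  simp
  ring

theorem aux {F E : Type*} [Field F] [Fintype F] [Field E] [Fintype E] [Algebra F E]
    (η : Eˣ →* ℂˣ) (m : ℕ) (hm0 : 0 < m) (hm : m < Module.finrank F E)
    (h : ∀ x : Eˣ, η (x ^ Fintype.card F ^ m) = η x) :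
    ∃ (K : IntermediateField F E) (η' : (↥K)ˣ →* ℂˣ), K ≠ ⊤ ∧
        ∀ x : Eˣ, η x = η' (Units.map (Algebra.norm ↥K) x) := by
  classical
  set φ := FiniteField.frobeniusAlgEquivOfAlgebraic F E with hφ
  have hord : orderOf φ = Module.finrank F E :=
    FiniteField.orderOf_frobeniusAlgEquivOfAlgebraic F E
  let H : Subgroup (E ≃ₐ[F] E) := Subgroup.zpowers (φ ^ m)
  let K : IntermediateField F E := IntermediateField.fixedField H
  have hfix : K.fixingSubgroup = H := IntermediateField.fixingSubgroup_fixedField H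
  have hpow : ∀ (k : ℕ) (x : Eˣ), η (x ^ (Fintype.card F ^ (m * k))) = η x := by
    intro k
    induction k with
    | zero => intro x; simp
    | succ k ih => intro x; rw [mul_add, mul_one, pow_add, pow_mul, h, ih]
  have hsurj : Function.Surjective (Units.map (Algebra.norm K (S := E))) :=
    FiniteField.unitsMap_norm_surjective K E
  have hker : (Units.map (Algebra.norm K (S := E))).ker ≤ η.ker := by
    intro x hx
    have hx1 : Algebra.norm K (x : E) = 1 := by
      simpa [MonoidHom.mem_ker, Units.ext_iff] using hx
    have : Fintype K := Fintype.ofFinite K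
    obtain ⟨y, hy⟩ := hilbert90 x hx1
    let g := FiniteField.frobeniusAlgEquivOfAlgebraic K E
    have hgm : g.restrictScalars F ∈ K.fixingSubgroup := by
      rw [IntermediateField.mem_fixingSubgroup_iff]
      intro z hz
      exact g.commutes ⟨z, hz⟩
    rw [hfix] at hgm
    obtain ⟨k, hk⟩ := (mem_powers_iff_mem_zpowers).2 hgm
    have hk2 : ∀ z : E, g z = z ^ (Fintype.card F ^ (m * k)) := by
      intro z
      have h1 : (φ ^ (m * k)) z = g z := by
        rw [pow_mul]
        exact DFunLike.congr_fun hk z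
      rw [← h1, AlgEquiv.coe_pow, hφ, FiniteField.coe_frobeniusAlgEquivOfAlgebraic_iterate]
    have hxy : x = y / y ^ (Fintype.card F ^ (m * k)) := by
      rw [hy]
      congr 1
      ext
      push_cast
      exact hk2 y
    rw [MonoidHom.mem_ker, hxy, map_div, hpow, div_self']
  refine ⟨K, MonoidHom.liftOfSurjective _ hsurj ⟨η, hker⟩, ?_, ?_⟩
  · intro hK
    have hb : H = ⊥ := by rw [← hfix, hK, IntermediateField.fixingSubgroup_top]
    have h1 : φ ^ m = 1 := Subgroup.zpowers_eq_bot.1 hb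
    have := Nat.le_of_dvd hm0 (orderOf_dvd_of_pow_eq_one h1)
    omega
  · intro x
    exact (MonoidHom.liftOfRightInverse_comp_apply _ _ _ ⟨η, hker⟩ x).symm

theorem aux2 {F E : Type*} [Field F] [Fintype F] [Field E] [Fintype E] [Algebra F E]
    (η : Eˣ →* ℂˣ) (i j : ℕ) (hij : i < j) (hj : j < Module.finrank F E)
    (h : ∀ x : Eˣ, η (x ^ Fintype.card F ^ i) = η (x ^ Fintype.card F ^ j)) :
    ∃ (K : IntermediateField F E) (η' : (↥K)ˣ →* ℂˣ), K ≠ ⊤ ∧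
        ∀ x : Eˣ, η x = η' (Units.map (Algebra.norm ↥K) x) := by
  refine aux η (j - i) (by omega) (by omega) fun x => ?_
  set φ := FiniteField.frobeniusAlgEquivOfAlgebraic F E with hφ
  obtain ⟨y, hy⟩ : ∃ y : Eˣ, y ^ Fintype.card F ^ i = x := by
    refine ⟨Units.map ((φ ^ i).symm : E →* E) x, ?_⟩
    ext
    have := (φ ^ i).apply_symm_apply (x : E)
    conv_lhs at this => rw [AlgEquiv.coe_pow, hφ, FiniteField.coe_frobeniusAlgEquivOfAlgebraic_iterate]
    simpa using this
  rw [← hy, h, ← pow_mul, ← pow_add]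
  congr 3
  omega


theorem regular_iff_not_norm_factor
    (F : Type*) [Field F] [Fintype F]
    (E : Type*) [Field E] [Fintype E] [Algebra F E]
    (q n : ℕ) (hq : Fintype.card F = q) (hn : Module.finrank F E = n)
    (η : Eˣ →* ℂˣ) :
    (∀ i < n, ∀ j < n, (∀ x : Eˣ, η (x ^ q ^ i) = η (x ^ q ^ j)) → i = j) ↔
      ¬ ∃ (K : IntermediateField F E) (η' : (↥K)ˣ →* ℂˣ), K ≠ ⊤ ∧
        ∀ x : Eˣ, η x = η' (Units.map (Algebra.norm ↥K) x) := by
  subst hq hn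
  constructor
  · rintro h ⟨K, η', hK, hη⟩
    classical
    have : Fintype K := Fintype.ofFinite K
    have hlt : Module.finrank F K < Module.finrank F E := by
      by_contra hle
      refine hK (IntermediateField.eq_of_le_of_finrank_le le_top ?_)
      rw [IntermediateField.finrank_top']
      omega
    have hpos : 0 < Module.finrank F K := Module.finrank_pos
    refine hpos.ne' (h _ hlt 0 (by omega) fun x => ?_)
    rw [pow_zero, pow_one, hη, hη x, map_pow]
    congr 1
    ext
    rw [← Module.card_eq_pow_finrank (K := F) (V := K), Units.val_pow_eq_pow_val,
      FiniteField.pow_card]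
  · intro h i hi j hj hx
    by_contra hne
    rcases lt_or_gt_of_ne hne with hlt | hlt
    · exact h (aux2 η i j hlt hj hx)
    · exact h (aux2 η j i hlt hi fun x => (hx x).symm)

end Stmt3
end
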